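/- arXiv:0804.2032 — 4 statements merged into one kernel-verified Lean document; each statement's English description precedes it below -/
import Mathlib

section
/- Let D be a digraph with a vertex r such that R_D(r) = V(D). An arc (u,v) of D with R_D(v) ≠ V(D) is not useless if and only if there is a dipath in D starting at r whose last arc is (u,v). -/
/-- A (finite, loopless) directed graph, given by its vertex set and arc set. -/
structure DirGraph (V : Type) where
  verts : Set V
  arcs : Set (V × V)

namespace DirGraph

variable {V : Type}

/-- Every arc joins two distinct vertices of the digraph. -/
def WellFormed (D : DirGraph V) : Prop :=
  ∀ a ∈ D.arcs, a.1 ∈ D.verts ∧ a.2 ∈ D.verts ∧ a.1 ≠ a.2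

/-- `T` is a subgraph of `D`. -/
def IsSubgraph (T D : DirGraph V) : Prop :=
  T.verts ⊆ D.verts ∧ T.arcs ⊆ D.arcs

/-- The in-degree of a vertex. -/
noncomputable def inDeg (D : DirGraph V) (v : V) : ℕ :=
  {a ∈ D.arcs | a.2 = v}.ncard

/-- The out-degree of a vertex. -/
noncomputable def outDeg (D : DirGraph V) (v : V) : ℕ :=
  {a ∈ D.arcs | a.1 = v}.ncard

/-- A dipath in `D`: a nonempty list of distinct vertices of `D`,
consecutive ones being joined by arcs of `D`. -/
def IsDipath (D : DirGraph V) (l : List V) : Prop :=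
  l ≠ [] ∧ l.Nodup ∧ (∀ v ∈ l, v ∈ D.verts) ∧
    l.Chain' (fun u v => (u, v) ∈ D.arcs)

/-- `v` is reachable from `u` by a dipath of `D` (in particular,
every vertex of `D` reaches itself). -/
def Reaches (D : DirGraph V) (u v : V) : Prop :=
  ∃ l : List V, D.IsDipath l ∧ l.head? = some u ∧ l.getLast? = some v

/-- `R_D(u)`: the set of vertices reachable from `u` in `D`. -/
def reachSet (D : DirGraph V) (u : V) : Set V := {v | D.Reaches u v}

/-- `T` is an out-tree with root `r`: `r` is the only vertex of in-degree 0,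
every other vertex has in-degree 1, and the underlying graph is a tree
(equivalently, under the degree conditions, every vertex is reachable from `r`). -/
structure IsOutTree (T : DirGraph V) (r : V) : Prop where
  arcs_mem : ∀ a ∈ T.arcs, a.1 ∈ T.verts ∧ a.2 ∈ T.verts
  root_mem : r ∈ T.verts
  root_indeg : T.inDeg r = 0
  indeg_one : ∀ v ∈ T.verts, v ≠ r → T.inDeg v = 1
  reach_root : ∀ v ∈ T.verts, T.Reaches r v

/-- `T` is an out-tree of the digraph `D`, with root `r`. -/
def IsOutTreeOf (T D : DirGraph V) (r : V) : Prop :=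
  T.IsOutTree r ∧ T.IsSubgraph D

/-- `T` is an out-branching (spanning out-tree) of `D`, with root `r`. -/
def IsOutBranching (T D : DirGraph V) (r : V) : Prop :=
  T.IsOutTreeOf D r ∧ T.verts = D.verts

/-- `Leaf(T)`: the vertices of out-degree 0. -/
def leaves (T : DirGraph V) : Set V := {v ∈ T.verts | T.outDeg v = 0}

/-- `Branch(T)`: the vertices of out-degree at least 2. -/
def branchVerts (T : DirGraph V) : Set V := {v ∈ T.verts | 2 ≤ T.outDeg v}

/-- `BrSucc(T)`: the vertices whose in-neighbor in `T` is a branch vertex. -/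
def brSucc (T : DirGraph V) : Set V := {v | ∃ u, (u, v) ∈ T.arcs ∧ 2 ≤ T.outDeg u}

/-- `Head(B)`: the set of heads of the arcs in `B`. -/
def heads (B : Set (V × V)) : Set V := Prod.snd '' B

/-- `Back_D^T(z) = {(u,v) ∈ A(D) : v ≺_T z ⪯_T u}`. -/
def backArcs (D T : DirGraph V) (z : V) : Set (V × V) :=
  {a ∈ D.arcs | (T.Reaches a.2 z ∧ a.2 ≠ z) ∧ T.Reaches z a.1}

/-- The 1-change for `(u,v)`: add the arc `(u,v)` and delete the arc of `T`
with head `v`. -/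
def oneChange (T : DirGraph V) (u v : V) : DirGraph V :=
  ⟨T.verts, {a ∈ T.arcs | a.2 ≠ v} ∪ {(u, v)}⟩

/-- `ℓ(D)`: the maximum number of leaves over all out-trees of `D`. -/
noncomputable def ell (D : DirGraph V) : ℕ :=
  sSup {k | ∃ (T : DirGraph V) (r : V), IsOutTreeOf T D r ∧ (leaves T).ncard = k}

/-- `ℓ_s(D)`: the maximum number of leaves over all out-branchings of `D`. -/
noncomputable def ellS (D : DirGraph V) : ℕ :=
  sSup {k | ∃ (T : DirGraph V) (r : V), IsOutBranching T D r ∧ (leaves T).ncard = k}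

/-- An arc is useless if no out-branching of `D` contains it. -/
def Useless (D : DirGraph V) (a : V × V) : Prop :=
  ∀ (T : DirGraph V) (r : V), IsOutBranching T D r → a ∉ T.arcs

/-- `T` is a 1-optimal out-branching of `D`: no 1-change for an arc of
`A(D) \ A(T)` results in an out-branching with more leaves. -/
def IsOneOptimal (T D : DirGraph V) (r : V) : Prop :=
  IsOutBranching T D r ∧
    ∀ u v : V, (u, v) ∈ D.arcs → (u, v) ∉ T.arcs → v ≠ r →
      ∀ r' : V, IsOutBranching (oneChange T u v) D r' →
        (leaves (oneChange T u v)).ncard ≤ (leaves T).ncard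

/-- `(X, U)` is a tree decomposition of the digraph `D`: `U` is a tree,
every vertex of `D` is in some bag, both endpoints of every arc are in a
common bag, and for every vertex the set of nodes whose bags contain it
induces a subtree (a connected subgraph) of `U`. -/
structure IsTreeDecomp {ι : Type} (D : DirGraph V) (U : SimpleGraph ι) (X : ι → Set V) :
    Prop where
  tree : U.IsTree
  mem_bag : ∀ v ∈ D.verts, ∃ i, v ∈ X i
  arc_bag : ∀ a ∈ D.arcs, ∃ i, a.1 ∈ X i ∧ a.2 ∈ X i
  bag_connected : ∀ (v : V) (i j : ι), v ∈ X i → v ∈ X j →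
    Relation.ReflTransGen (fun x y => U.Adj x y ∧ v ∈ X x ∧ v ∈ X y) i j

/-- The underlying undirected graph of `T`, on the vertex set of `T`. -/
def underlying (T : DirGraph V) : SimpleGraph {v // v ∈ T.verts} :=
  SimpleGraph.fromRel fun a b => ((a : V), (b : V)) ∈ T.arcs

/-- The bag `X_v = {u, v} ∪ BrSucc(T) ∪ Leaf(T) ∪ Head(Back_D^T(v))`,
where `u` is the in-neighbor of `v` in `T` (omitted when `v` is the root). -/
def bag (D T : DirGraph V) (v : V) : Set V :=
  {u | (u, v) ∈ T.arcs} ∪ {v} ∪ brSucc T ∪ leaves T ∪ heads (backArcs D T v)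

/-- The set of arcs of a dipath given as a list of vertices. -/
def listArcs (l : List V) : Set (V × V) := {a | a ∈ l.zip l.tail}

end DirGraph

namespace DirGraph

/-- The arc relation. -/
def Rel {V : Type} (D : DirGraph V) (a b : V) : Prop := (a, b) ∈ D.arcs

theorem reaches_of_rtg {V : Type} (D : DirGraph V)
    (hD : ∀ a ∈ D.arcs, a.1 ∈ D.verts ∧ a.2 ∈ D.verts) {a b : V} (ha : a ∈ D.verts)
    (h : Relation.ReflTransGen D.Rel a b) : D.Reaches a b := by
  induction h with
  | refl => exact ⟨[a], ⟨by simp, by simp, by simpa using ha, List.isChain_singleton _⟩, by simp, by simp⟩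
  | @tail b c hab hbc ih =>
    obtain ⟨l, ⟨h1, h2, h3, h4⟩, h5, h6⟩ := ih
    by_cases hc : c ∈ l
    · obtain ⟨l1, l2, rfl⟩ := List.append_of_mem hc
      have e : l1 ++ c :: l2 = (l1 ++ [c]) ++ l2 := by simp
      rw [e] at h2 h3 h4 h5
      refine ⟨l1 ++ [c], ⟨by simp, (List.nodup_append.1 h2).1,
        fun x hx => h3 x (List.mem_append_left _ hx), (List.isChain_append.1 h4).1⟩, ?_, by simp⟩
      cases l1 <;> simpa using h5
    · refine ⟨l ++ [c], ⟨by simp, ?_, ?_, ?_⟩, ?_, by simp⟩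
      · rw [List.nodup_append]
        refine ⟨h2, by simp, ?_⟩
        intro x hx y hy hxy
        simp at hy
        subst hy
        subst hxy
        exact hc hx
      · intro x hx
        rcases List.mem_append.1 hx with hx | hx
        · exact h3 x hx
        · simp at hx
          subst hx
          exact (hD _ hbc).2
      · refine List.isChain_append.2 ⟨h4, by simp, ?_⟩
        intro x hx y hy
        rw [h6] at hx
        simp at hx hy
        subst hx
        subst hy
        exact hbc
      · cases l with
        | nil => exact absurd rfl h1
        | cons x t => simpa using h5

theorem rtg_of_chain {V : Type} (R : V → V → Prop) (l : List V) :
    ∀ a b : V, l.IsChain R → l.head? = some a → l.getLast? = some b →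
      Relation.ReflTransGen R a b := by
  induction l with
  | nil => intro a b _ h; simp at h
  | cons x t ih =>
    intro a b hc h1 h2
    simp at h1
    subst h1
    cases t with
    | nil =>
      simp at h2
      subst h2
      exact .refl
    | cons y t =>
      rw [List.isChain_cons_cons] at hc
      exact .head hc.1 (ih y b hc.2 rfl (by simpa using h2))

theorem Reaches.rtg {V : Type} {D : DirGraph V} {a b : V} (h : D.Reaches a b) :
    Relation.ReflTransGen D.Rel a b := by
  obtain ⟨l, h, h5, h6⟩ := h
  exact rtg_of_chain _ l a b h.2.2.2 h5 h6

theorem Reaches.mem_right {V : Type} {D : DirGraph V} {a b : V} (h : D.Reaches a b) :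
    b ∈ D.verts := by
  obtain ⟨l, h, h5, h6⟩ := h
  exact h.2.2.1 b (List.mem_of_getLast? h6)

theorem Reaches.mem_left {V : Type} {D : DirGraph V} {a b : V} (h : D.Reaches a b) :
    a ∈ D.verts := by
  obtain ⟨l, h, h5, h6⟩ := h
  exact h.2.2.1 a (List.mem_of_head? h5)

/-- There is a walk of length `n` from `r`. -/
inductive WalkLen {V : Type} (R : V → V → Prop) (r : V) : ℕ → V → Prop
  | zero : WalkLen R r 0 r
  | succ {n : ℕ} {x y : V} : WalkLen R r n x → R x y → WalkLen R r (n + 1) y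

theorem exists_branching {V : Type} (D : DirGraph V) (r : V)
    (hD : ∀ a ∈ D.arcs, a.1 ∈ D.verts ∧ a.2 ∈ D.verts) (hrv : r ∈ D.verts)
    (hr : ∀ x ∈ D.verts, Relation.ReflTransGen D.Rel r x) :
    ∃ T : DirGraph V, IsOutBranching T D r := by
  classical
  have hw : ∀ x ∈ D.verts, ∃ n, WalkLen D.Rel r n x := by
    intro x hx
    have h := hr x hx
    clear hx
    induction h with
    | refl => exact ⟨0, .zero⟩
    | tail _ h2 ih => exact ⟨_, .succ ih.choose_spec h2⟩
  let d : V → ℕ := fun x => sInf {n | WalkLen D.Rel r n x}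
  have hp : ∀ x : V, ∃ p, x ∈ D.verts → x ≠ r → D.Rel p x ∧ d p < d x := by
    intro x
    by_cases hx : x ∈ D.verts
    · have h : WalkLen D.Rel r (d x) x := Nat.sInf_mem (hw x hx)
      generalize hn : d x = n at h
      cases h with
      | zero => exact ⟨r, fun _ h => absurd rfl h⟩
      | @succ n y _ h1 h2 =>
        exact ⟨y, fun _ _ => ⟨h2, Nat.lt_succ_of_le (Nat.sInf_le h1)⟩⟩
    · exact ⟨r, fun h => absurd h hx⟩
  choose p hp using hp
  let T : DirGraph V := ⟨D.verts, {a | a.2 ∈ D.verts ∧ a.2 ≠ r ∧ a.1 = p a.2}⟩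
  have hsub : T.arcs ⊆ D.arcs := by
    rintro ⟨a, b⟩ ⟨h1, h2, h3⟩
    have := (hp b h1 h2).1
    simp only at h3
    rw [h3]
    exact this
  have hTm : ∀ a ∈ T.arcs, a.1 ∈ T.verts ∧ a.2 ∈ T.verts := fun a h => hD a (hsub h)
  have hreach : ∀ n, ∀ x ∈ D.verts, d x = n → Relation.ReflTransGen T.Rel r x := by
    intro n
    induction n using Nat.strong_induction_on with
    | _ n ih =>
      intro x hx hn
      by_cases hxr : x = r
      · rw [hxr]
      · have h := hp x hx hxr
        exact .tail (ih (d (p x)) (hn ▸ h.2) (p x) (hD _ h.1).1 rfl) ⟨hx, hxr, rfl⟩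
  refine ⟨T, ⟨⟨hTm, hrv, ?_, ?_, ?_⟩, subset_rfl, hsub⟩, rfl⟩
  · have : {a ∈ T.arcs | a.2 = r} = ∅ := by
      ext a
      simp only [Set.mem_setOf_eq, Set.mem_empty_iff_false, iff_false]
      rintro ⟨⟨_, h, _⟩, h'⟩
      exact h h'
    rw [inDeg, this, Set.ncard_empty]
  · intro x hx hxr
    have : {a ∈ T.arcs | a.2 = x} = {(p x, x)} := by
      ext ⟨a, b⟩
      simp only [Set.mem_setOf_eq, Set.mem_singleton_iff, Prod.mk.injEq]
      constructor
      · rintro ⟨⟨_, _, h⟩, rfl⟩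
        exact ⟨h, rfl⟩
      · rintro ⟨rfl, rfl⟩
        exact ⟨⟨hx, hxr, rfl⟩, rfl⟩
    rw [inDeg, this, Set.ncard_singleton]
  · intro x hx
    exact reaches_of_rtg T hTm hrv (hreach _ x hx rfl)

/-- Delete a vertex. -/
def del {V : Type} (D : DirGraph V) (v : V) : DirGraph V :=
  ⟨D.verts \ {v}, {a ∈ D.arcs | a.1 ≠ v ∧ a.2 ≠ v}⟩

theorem not_useless_iff_dipath_from_root {V : Type} [Fintype V]
    (D : DirGraph V) (r u v : V) (hD : D.WellFormed)
    (hr : reachSet D r = D.verts)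
    (ha : (u, v) ∈ D.arcs) (hv : reachSet D v ≠ D.verts) :
    ¬ Useless D (u, v) ↔
      ∃ l : List V, D.IsDipath (l ++ [u, v]) ∧ (l ++ [u, v]).head? = some r := by
  have hD' : ∀ a ∈ D.arcs, a.1 ∈ D.verts ∧ a.2 ∈ D.verts :=
    fun a h => ⟨(hD a h).1, (hD a h).2.1⟩
  obtain ⟨huV, hvV, huv⟩ := hD _ ha
  simp only at huV hvV huv
  have hreach : ∀ x ∈ D.verts, D.Reaches r x := fun x hx => by
    rw [← hr] at hx; exact hx
  have hrV : r ∈ D.verts := (hreach v hvV).mem_left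
  constructor
  · intro h
    simp only [Useless, not_forall, not_not] at h
    obtain ⟨T, r', ⟨⟨hT, hTs⟩, hTv⟩, hTa⟩ := h
    have hvr' : v ≠ r' := by
      rintro rfl
      have h0 := hT.root_indeg
      rw [inDeg, Set.ncard_eq_zero (Set.toFinite _)] at h0
      have : (u, v) ∈ ({a ∈ T.arcs | a.2 = v} : Set (V × V)) := ⟨hTa, rfl⟩
      rw [h0] at this
      exact this
    have hr'V : r' ∈ D.verts := hTv ▸ hT.root_mem
    have hTD : ∀ x y, T.Rel x y → D.Rel x y := fun x y h => hTs.2 h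
    have hnot : ¬ Relation.ReflTransGen D.Rel v r' := by
      intro hc
      apply hv
      apply Set.Subset.antisymm
      · intro x hx
        exact Reaches.mem_right hx
      · intro x hx
        exact reaches_of_rtg D hD' hvV
          (hc.trans (Relation.ReflTransGen.mono hTD _ _ (hT.reach_root x (hTv ▸ hx)).rtg))
    have h1 : Relation.ReflTransGen (D.del v).Rel r r' := by
      have h := (hreach r' hr'V).rtg
      clear hreach hr hrV
      induction h using Relation.ReflTransGen.head_induction_on with
      | refl => exact .refl
      | head hab hbc ih =>
        refine .head ⟨hab, ?_, ?_⟩ ih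
        · rintro rfl
          exact hnot (.head hab hbc)
        · rintro rfl
          exact hnot hbc
    have h2 : Relation.ReflTransGen (D.del v).Rel r' u := by
      obtain ⟨l, ⟨g1, g2, g3, g4⟩, g5, g6⟩ := hT.reach_root v (hTv ▸ hvV)
      obtain ⟨l, rfl⟩ := List.getLast?_eq_some_iff.1 g6
      have hl : l ≠ [] := by
        rintro rfl
        simp at g5
        exact hvr' g5
      have hvl : v ∉ l := by
        intro h
        exact (List.nodup_append.1 g2).2.2 v h v (by simp) rfl
      obtain ⟨c1, _, c2⟩ := List.isChain_append.1 g4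
      have hlast : l.getLast? = some (l.getLast hl) := List.getLast?_eq_getLast_of_ne_nil hl
      have hw := c2 _ hlast v rfl
      have hwu : l.getLast hl = u := by
        have hone := hT.indeg_one v (hTv ▸ hvV) hvr'
        rw [inDeg, Set.ncard_eq_one] at hone
        obtain ⟨a, hone⟩ := hone
        have e1 : (u, v) ∈ ({a ∈ T.arcs | a.2 = v} : Set (V × V)) := ⟨hTa, rfl⟩
        have e2 : (l.getLast hl, v) ∈ ({a ∈ T.arcs | a.2 = v} : Set (V × V)) := ⟨hw, rfl⟩
        rw [hone, Set.mem_singleton_iff] at e1 e2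
        exact (Prod.mk.inj (e2.trans e1.symm)).1
      rw [hwu] at hlast
      refine rtg_of_chain _ l r' u ?_ ?_ hlast
      · refine List.IsChain.imp_of_mem_imp ?_ c1
        intro x y hx hy hxy
        exact ⟨hTs.2 hxy, fun e => hvl (e ▸ hx), fun e => hvl (e ▸ hy)⟩
      · cases l with
        | nil => exact absurd rfl hl
        | cons x t => simpa using g5
    have hrv : r ≠ v := by
      rintro rfl
      exact hv hr
    obtain ⟨l, ⟨g1, g2, g3, g4⟩, g5, g6⟩ := reaches_of_rtg (D.del v)
      (fun a h => ⟨⟨(hD' a h.1).1, h.2.1⟩, ⟨(hD' a h.1).2, h.2.2⟩⟩) ⟨hrV, hrv⟩ (h1.trans h2)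
    obtain ⟨l, rfl⟩ := List.getLast?_eq_some_iff.1 g6
    have e : l ++ [u, v] = (l ++ [u]) ++ [v] := by simp
    refine ⟨l, ?_, ?_⟩
    · rw [e]
      refine ⟨by simp, ?_, ?_, ?_⟩
      · rw [List.nodup_append]
        refine ⟨g2, by simp, ?_⟩
        intro x hx y hy hxy
        simp only [List.mem_singleton] at hy
        exact (g3 x hx).2 (hxy.trans hy)
      · intro x hx
        rcases List.mem_append.1 hx with hx | hx
        · exact (g3 x hx).1
        · simp only [List.mem_singleton] at hx
          exact hx ▸ hvV
      · refine List.isChain_append.2 ⟨List.IsChain.imp (fun _ _ h => h.1) g4, by simp, ?_⟩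
        intro x hx y hy
        rw [g6] at hx
        simp at hx hy
        subst hx
        subst hy
        exact ha
    · cases l <;> simpa using g5
  · rintro ⟨l, ⟨_, g2, g3, g4⟩, g5⟩ hU
    have e : l ++ [u, v] = (l ++ [u]) ++ [v] := by simp
    rw [e] at g2 g4
    have hvl : v ∉ l ++ [u] := fun h => (List.nodup_append.1 g2).2.2 v h v (by simp) rfl
    have g5' : (l ++ [u]).head? = some r := by cases l <;> simpa using g5
    have hrv : v ≠ r := by
      rintro rfl
      exact hvl (List.mem_of_head? g5')
    let D' : DirGraph V := ⟨D.verts, {a ∈ D.arcs | a.2 = v → a.1 = u}⟩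
    have hru : Relation.ReflTransGen D'.Rel r u := by
      refine rtg_of_chain _ (l ++ [u]) r u ?_ g5' (by simp)
      refine List.IsChain.imp_of_mem_imp ?_ (List.isChain_append.1 g4).1
      intro x y hx hy hxy
      exact ⟨hxy, fun e => absurd (e ▸ hy) hvl⟩
    have hrv' : Relation.ReflTransGen D'.Rel r v := .tail hru ⟨ha, fun _ => rfl⟩
    have hall : ∀ x ∈ D'.verts, Relation.ReflTransGen D'.Rel r x := by
      intro x hx
      have h := (hreach x hx).rtg
      clear hx
      induction h with
      | refl => exact .refl
      | @tail b c _ hbc ih =>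
        by_cases hc : c = v
        · exact hc ▸ hrv'
        · exact .tail ih ⟨hbc, fun e => absurd e hc⟩
    obtain ⟨T, ⟨hT, hTs⟩, hTv⟩ := exists_branching D' r (fun a h => hD' a h.1) hrV hall
    refine hU T r ⟨⟨hT, hTs.1, fun a h => (hTs.2 h).1⟩, hTv⟩ ?_
    have hone := hT.indeg_one v (hTv ▸ hvV) hrv
    rw [inDeg, Set.ncard_eq_one] at hone
    obtain ⟨⟨a, b⟩, hone⟩ := hone
    have hm : (a, b) ∈ ({a ∈ T.arcs | a.2 = v} : Set (V × V)) := by rw [hone]; rfl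
    obtain ⟨m1, m2⟩ := hm
    simp only at m2
    subst m2
    have := (hTs.2 m1).2 rfl
    simp only at this
    exact this ▸ m1

end DirGraph
end

section
/- Let D be a digraph that has at least one out-branching and contains no useless arcs. If ℓ(D) ≥ 3k, then ℓ_s(D) ≥ k. -/
namespace DirGraph


open Relation

/-- Weighted walks from `r`. -/
inductive Wk {V : Type} (R : V → V → Prop) (w : V → ℕ) (r : V) : V → ℕ → Prop
  | nil : Wk R w r r 0
  | step {u v : V} {m : ℕ} : Wk R w r u m → R u v → Wk R w r v (m + w v)

theorem Wk.reach {V : Type} {R : V → V → Prop} {w : V → ℕ} {r v : V} {m : ℕ}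
    (h : Wk R w r v m) : ReflTransGen R r v := by
  induction h with
  | nil => exact .refl
  | step _ h2 ih => exact ih.tail h2

theorem exists_pot {V : Type} (R : V → V → Prop) (r : V) (w : V → ℕ) :
    ∃ d : V → ℕ, (∀ u v, ReflTransGen R r u → R u v → d v ≤ d u + w v) ∧
      (∀ v, ReflTransGen R r v → v ≠ r →
        ∃ u, ReflTransGen R r u ∧ R u v ∧ d v = d u + w v) := by
  have hne : ∀ v, ReflTransGen R r v → ({m | Wk R w r v m} : Set ℕ).Nonempty := by
    intro v h
    induction h with
    | refl => exact ⟨0, .nil⟩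
    | tail _ h2 ih => obtain ⟨m, hm⟩ := ih; exact ⟨_, Wk.step hm h2⟩
  have h1 : ∀ u v, ReflTransGen R r u → R u v →
      sInf {m | Wk R w r v m} ≤ sInf {m | Wk R w r u m} + w v := by
    intro u v hu huv
    apply Nat.sInf_le
    exact Wk.step (Nat.sInf_mem (hne u hu)) huv
  refine ⟨fun v => sInf {m | Wk R w r v m}, h1, ?_⟩
  intro v hv hvr
  have hm := Nat.sInf_mem (hne v hv)
  generalize hk : sInf {m | Wk R w r v m} = k at hm
  cases hm with
  | nil => exact absurd rfl hvr
  | @step u _ m h2 h3 =>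
    refine ⟨u, h2.reach, h3, ?_⟩
    have h4 := h1 u v h2.reach h3
    have h5 : sInf {m | Wk R w r u m} ≤ m := Nat.sInf_le h2
    show sInf {m | Wk R w r v m} = sInf {m | Wk R w r u m} + w v
    omega

theorem exists_tight_path {V : Type} (R : V → V → Prop) (r : V) (w d : V → ℕ)
    (hw : ∀ v, 1 ≤ w v)
    (hd : ∀ v, ReflTransGen R r v → v ≠ r →
        ∃ u, ReflTransGen R r u ∧ R u v ∧ d v = d u + w v)
    (x : V) (hx : ReflTransGen R r x) :
    ∃ (n : ℕ) (p : ℕ → V), p 0 = r ∧ p n = x ∧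
      ∀ i < n, R (p i) (p (i + 1)) ∧ d (p (i + 1)) = d (p i) + w (p (i + 1)) := by
  induction hk : d x using Nat.strong_induction_on generalizing x with
  | _ k ih =>
    by_cases hxr : x = r
    · exact ⟨0, fun _ => r, rfl, hxr.symm, by simp⟩
    · obtain ⟨u, hu, hux, hdx⟩ := hd x hx hxr
      have := hw x
      obtain ⟨n, p, h0, hn, hp⟩ := ih (d u) (by omega) u hu rfl
      refine ⟨n + 1, fun i => if i ≤ n then p i else x, by simp [h0], by simp, ?_⟩
      intro i hi
      rcases Nat.lt_or_ge i n with h | h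
      · have h1 : i ≤ n := h.le
        have h2 : i + 1 ≤ n := h
        simpa [h1, h2] using hp i h
      · have : i = n := by omega
        subst this
        simp [hn, hux, hdx]

theorem reach_of_reaches {V : Type} {D : DirGraph V} {u v : V} (h : D.Reaches u v) :
    ReflTransGen (fun a b => (a, b) ∈ D.arcs) u v := by
  obtain ⟨l, ⟨hne, -, -, hc⟩, hh, hl⟩ := h
  induction l generalizing u with
  | nil => exact absurd rfl hne
  | cons a t ih =>
    simp only [List.head?_cons, Option.some.injEq] at hh
    subst hh
    cases t with
    | nil =>
      simp at hl
      subst hl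
      exact .refl
    | cons b t =>
      have hc' : List.IsChain (fun u v => (u, v) ∈ D.arcs) (a :: b :: t) := hc
      rw [List.isChain_cons_cons] at hc'
      refine .head hc'.1 (ih (by simp) hc'.2 (by simp) ?_)
      simpa using hl

theorem reaches_of_reach {V : Type} {D : DirGraph V} {u v : V} (hu : u ∈ D.verts)
    (hD : ∀ a ∈ D.arcs, a.2 ∈ D.verts)
    (h : ReflTransGen (fun a b => (a, b) ∈ D.arcs) u v) : D.Reaches u v := by
  induction h with
  | refl => exact ⟨[u], ⟨by simp, by simp, by simpa using hu, List.isChain_singleton _⟩, rfl, rfl⟩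
  | @tail b c _ hbc ih =>
    obtain ⟨l, ⟨hne, hnd, hv, hc⟩, hh, hl⟩ := ih
    by_cases hcl : c ∈ l
    · obtain ⟨s, t, rfl⟩ := List.append_of_mem hcl
      have he : s ++ c :: t = (s ++ [c]) ++ t := by simp
      rw [he] at hnd hc hh hv
      refine ⟨s ++ [c], ⟨by simp, (List.nodup_append.1 hnd).1,
        fun v h => hv v (List.mem_append_left _ h), (List.isChain_append.1 hc).1⟩, ?_, by simp⟩
      cases s <;> simpa using hh
    · refine ⟨l ++ [c], ⟨by simp, ?_, ?_, ?_⟩, ?_, by simp⟩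
      · rw [List.nodup_append]
        refine ⟨hnd, by simp, ?_⟩
        intro a ha b hb
        simp at hb
        subst hb
        rintro rfl
        exact hcl ha
      · intro v h
        rcases List.mem_append.1 h with h | h
        · exact hv v h
        · simp at h
          subst h
          exact hD _ hbc
      · refine List.isChain_append.2 ⟨hc, List.isChain_singleton _, ?_⟩
        intro a ha b hb
        simp at hb
        subst hb
        rw [hl] at ha
        simp at ha
        subst ha
        exact hbc
      · cases l with
        | nil => exact absurd rfl hne
        | cons a t => simpa using hh

/-- Reachability from `r` avoiding `S`. -/
def Av {V : Type} (D : DirGraph V) (S : Set V) (r v : V) : Prop :=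
  ReflTransGen (fun a b => (a, b) ∈ D.arcs ∧ b ∉ S) r v

theorem Av.not_mem {V : Type} {D : DirGraph V} {S : Set V} {r v : V} (h : Av D S r v)
    (hr : r ∉ S) : v ∉ S := by
  cases h with
  | refl => exact hr
  | tail _ h => exact h.2

theorem bdd_aux {V : Type} [Fintype V] (D : DirGraph V) :
    BddAbove {k | ∃ (T : DirGraph V) (r : V), IsOutBranching T D r ∧ (leaves T).ncard = k} := by
  refine ⟨Nat.card V, ?_⟩
  rintro k ⟨T, r, -, rfl⟩
  exact Set.ncard_le_card _

theorem bdd_aux2 {V : Type} [Fintype V] (D : DirGraph V) :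
    BddAbove {k | ∃ (T : DirGraph V) (r : V), IsOutTreeOf T D r ∧ (leaves T).ncard = k} := by
  refine ⟨Nat.card V, ?_⟩
  rintro k ⟨T, r, -, rfl⟩
  exact Set.ncard_le_card _

theorem keyK_full {V : Type} [Fintype V] (D : DirGraph V) (hD : D.WellFormed) (r : V)
    (hr : r ∈ D.verts) (S : Set V) (hrS : r ∉ S)
    (hS : ∀ s ∈ S, ∃ u, Av D S r u ∧ (u, s) ∈ D.arcs)
    (hfull : ∀ v ∈ D.verts, Av D S r v ∨ v ∈ S) : S.ncard ≤ ellS D := by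
  classical
  obtain ⟨d, -, hd⟩ := exists_pot (fun a b => (a, b) ∈ D.arcs ∧ b ∉ S) r (fun _ => 1)
  have hpar : ∀ v, ∃ u, (v ∈ D.verts → v ≠ r →
      Av D S r u ∧ (u, v) ∈ D.arcs ∧ (v ∉ S → d u < d v)) := by
    intro v
    by_cases hv : v ∈ D.verts
    · by_cases hvr : v = r
      · exact ⟨v, fun _ h => absurd hvr h⟩
      · by_cases hvS : v ∈ S
        · obtain ⟨u, h1, h2⟩ := hS v hvS
          exact ⟨u, fun _ _ => ⟨h1, h2, fun h => absurd hvS h⟩⟩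
        · obtain ⟨u, h1, h2, h3⟩ := hd v ((hfull v hv).resolve_right hvS) hvr
          exact ⟨u, fun _ _ => ⟨h1, h2.1, fun _ => by omega⟩⟩
    · exact ⟨v, fun h => absurd h hv⟩
  choose par hpar using hpar
  let T : DirGraph V := ⟨D.verts, {a | a.2 ∈ D.verts ∧ a.2 ≠ r ∧ a.1 = par a.2}⟩
  have hTv : T.verts = D.verts := rfl
  have hTa : ∀ u v, (u, v) ∈ T.arcs ↔ v ∈ D.verts ∧ v ≠ r ∧ u = par v := fun u v => Iff.rfl
  have hSub : T.arcs ⊆ D.arcs := by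
    rintro ⟨u, v⟩ h
    obtain ⟨h1, h2, rfl⟩ := (hTa _ _).1 h
    exact (hpar v h1 h2).2.1
  have hreach1 : ∀ k, ∀ v ∈ D.verts, v ∉ S → d v = k →
      ReflTransGen (fun a b => (a, b) ∈ T.arcs) r v := by
    intro k
    induction k using Nat.strong_induction_on with
    | _ k ih =>
      intro v hv hvS hk
      by_cases hvr : v = r
      · rw [hvr]
      · obtain ⟨h1, h2, h3⟩ := hpar v hv hvr
        exact (ih (d (par v)) (by have := h3 hvS; omega) (par v) (hD _ h2).1
          (h1.not_mem hrS) rfl).tail ((hTa _ _).2 ⟨hv, hvr, rfl⟩)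
  have hreach : ∀ v ∈ D.verts, ReflTransGen (fun a b => (a, b) ∈ T.arcs) r v := by
    intro v hv
    by_cases hvS : v ∈ S
    · have hvr : v ≠ r := fun h => hrS (h ▸ hvS)
      obtain ⟨h1, h2, h3⟩ := hpar v hv hvr
      exact (hreach1 _ (par v) (hD _ h2).1 (h1.not_mem hrS) rfl).tail
        ((hTa _ _).2 ⟨hv, hvr, rfl⟩)
    · exact hreach1 _ v hv hvS rfl
  have hB : IsOutBranching T D r := by
    refine ⟨⟨⟨?_, hr, ?_, ?_, ?_⟩, ⟨le_rfl, hSub⟩⟩, rfl⟩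
    · intro a ha
      exact ⟨(hD a (hSub ha)).1, (hD a (hSub ha)).2.1⟩
    · have : {a ∈ T.arcs | a.2 = r} = ∅ := by
        ext ⟨u, v⟩
        simp only [Set.mem_ofPred_eq, hTa, Set.mem_empty_iff_false]
        tauto
      rw [inDeg, this, Set.ncard_empty]
    · intro v hv hvr
      have : {a ∈ T.arcs | a.2 = v} = {(par v, v)} := by
        ext ⟨a, b⟩
        simp only [Set.mem_ofPred_eq, hTa, Set.mem_singleton_iff, Prod.mk.injEq]
        constructor
        · rintro ⟨⟨_, _, h⟩, rfl⟩
          exact ⟨h, rfl⟩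
        · rintro ⟨rfl, rfl⟩
          exact ⟨⟨hv, hvr, rfl⟩, rfl⟩
      rw [inDeg, this, Set.ncard_singleton]
    · intro v hv
      exact reaches_of_reach hr (fun a ha => (hD a (hSub ha)).2.1) (hreach v hv)
  have hleaf : S ⊆ leaves T := by
    intro s hs
    obtain ⟨u, _, hu⟩ := hS s hs
    refine ⟨(hD _ hu).2.1, ?_⟩
    have : {a ∈ T.arcs | a.1 = s} = ∅ := by
      ext ⟨a, b⟩
      simp only [Set.mem_ofPred_eq, hTa, Set.mem_empty_iff_false, iff_false]
      rintro ⟨⟨h1, h2, h3⟩, h4⟩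
      have := (hpar b h1 h2).1.not_mem hrS
      rw [← h3, h4] at this
      exact this hs
    rw [outDeg, this, Set.ncard_empty]
  calc S.ncard ≤ (leaves T).ncard := Set.ncard_le_ncard hleaf
    _ ≤ ellS D := le_csSup (bdd_aux D) ⟨T, r, hB, rfl⟩

theorem keyK {V : Type} [Fintype V] (D : DirGraph V) (hD : D.WellFormed) (r : V)
    (hr : r ∈ D.verts) (hreach : ∀ v ∈ D.verts, ReflTransGen (fun a b => (a, b) ∈ D.arcs) r v)
    (S : Set V) (hrS : r ∉ S)
    (hS : ∀ s ∈ S, ∃ u, Av D S r u ∧ (u, s) ∈ D.arcs) : S.ncard ≤ ellS D := by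
  classical
  induction hm : Nat.card V - {v | Av D S r v}.ncard using Nat.strong_induction_on
    generalizing S with
  | _ m ih =>
    by_cases hfull : ∀ v ∈ D.verts, Av D S r v ∨ v ∈ S
    · exact keyK_full D hD r hr S hrS hS hfull
    · push Not at hfull
      obtain ⟨v, hv, hvA, hvS⟩ := hfull
      -- find an arc leaving `Av ∪ S`
      have key : ∀ y, ReflTransGen (fun a b => (a, b) ∈ D.arcs) r y →
          (Av D S r y ∨ y ∈ S) ∨ ∃ s w, s ∈ S ∧ (s, w) ∈ D.arcs ∧ ¬ Av D S r w ∧ w ∉ S := by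
        intro y hy
        induction hy with
        | refl => exact .inl (.inl .refl)
        | @tail b c _ hbc ihb =>
          rcases ihb with (h | h) | h
          · left
            by_cases hc : c ∈ S
            · exact .inr hc
            · exact .inl (ReflTransGen.tail h ⟨hbc, hc⟩)
          · by_cases hc : Av D S r c ∨ c ∈ S
            · exact .inl hc
            · push Not at hc
              exact .inr ⟨b, c, h, hbc, hc.1, hc.2⟩
          · exact .inr h
      obtain ⟨s, w, hs, hsw, hwA, hwS⟩ : ∃ s w, s ∈ S ∧ (s, w) ∈ D.arcs ∧
          ¬ Av D S r w ∧ w ∉ S := by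
        rcases key v (hreach v hv) with h | h
        · tauto
        · exact h
      set S' : Set V := insert w (S \ {s}) with hS'
      have hrw : r ≠ w := by
        rintro rfl
        exact hwA .refl
      have hrS' : r ∉ S' := by
        simp [hS', hrw, hrS]
      have hmono : ∀ y, Av D S r y → Av D S' r y := by
        intro y hy
        induction hy with
        | refl => exact .refl
        | @tail b c hb hbc ihb =>
          refine ReflTransGen.tail ihb ⟨hbc.1, ?_⟩
          intro hc
          rcases hc with rfl | hc
          · exact hwA (ReflTransGen.tail hb hbc)
          · exact hbc.2 hc.1
      have hsA : Av D S' r s := by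
        obtain ⟨u, hu, hus⟩ := hS s hs
        refine ReflTransGen.tail (hmono u hu) ⟨hus, ?_⟩
        rintro (rfl | h)
        · exact hwS hs
        · exact h.2 rfl
      have hcard : S'.ncard = S.ncard := by
        rw [hS', Set.ncard_insert_of_notMem (fun h => hwS h.1), Set.ncard_sdiff_singleton_add_one hs]
      rw [← hcard]
      refine ih _ ?_ S' hrS' ?_ rfl
      · have hlt : {v | Av D S r v}.ncard < {v | Av D S' r v}.ncard := by
          refine Set.ncard_lt_ncard ?_ (Set.toFinite _)
          refine ⟨fun y hy => hmono y hy, fun h => ?_⟩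
          exact (Av.not_mem (h hsA : Av D S r s) hrS) hs
        have := Set.ncard_le_card {v | Av D S' r v}
        omega
      · rintro t (rfl | ht)
        · exact ⟨s, hsA, hsw⟩
        · obtain ⟨u, hu, hut⟩ := hS t ht.1
          exact ⟨u, hmono u hu, hut⟩

theorem rtg_mono {V : Type} {R R' : V → V → Prop} (h : ∀ a b, R a b → R' a b) {a b : V}
    (hab : ReflTransGen R a b) : ReflTransGen R' a b := by
  induction hab with
  | refl => exact .refl
  | tail _ h2 ih => exact ih.tail (h _ _ h2)

theorem first_hit {V : Type} {R : V → V → Prop} {a y : V} (v : V) (h : ReflTransGen R a y) :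
    ReflTransGen (fun a b => R a b ∧ b ∉ ({v} : Set V)) a y ∨
      ∃ u, ReflTransGen (fun a b => R a b ∧ b ∉ ({v} : Set V)) a u ∧ R u v := by
  induction h with
  | refl => exact .inl .refl
  | @tail b c _ hbc ih =>
    rcases ih with h | h
    · by_cases hc : c = v
      · subst hc
        exact .inr ⟨b, h, hbc⟩
      · exact .inl (h.tail ⟨hbc, by simpa using hc⟩)
    · exact .inr h

theorem split_at {V : Type} {R : V → V → Prop} {a y : V} (v : V) (h : ReflTransGen R a y) :
    ReflTransGen (fun a b => R a b ∧ b ∉ ({v} : Set V)) a y ∨ ReflTransGen R v y := by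
  induction h with
  | refl => exact .inl .refl
  | @tail b c _ hbc ih =>
    rcases ih with h | h
    · by_cases hc : c = v
      · subst hc
        exact .inr .refl
      · exact .inl (h.tail ⟨hbc, by simpa using hc⟩)
    · exact .inr (h.tail hbc)

theorem exists_parent {V : Type} [Fintype V] {T : DirGraph V} {r v : V} (hT : T.IsOutTree r)
    (hv : v ∈ T.verts) (hvr : v ≠ r) :
    ∃ u, (u, v) ∈ T.arcs ∧ ∀ u', (u', v) ∈ T.arcs → u' = u := by
  have h := hT.indeg_one v hv hvr
  rw [inDeg, Set.ncard_eq_one] at h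
  obtain ⟨⟨a, b⟩, h⟩ := h
  have h1 : (a, b) ∈ {a ∈ T.arcs | a.2 = v} := by rw [h]; rfl
  obtain ⟨h2, h3⟩ := h1
  simp only at h3
  subst h3
  refine ⟨a, h2, fun u' hu' => ?_⟩
  have h4 : (u', b) ∈ {a ∈ T.arcs | a.2 = b} := ⟨hu', rfl⟩
  rw [h] at h4
  simpa using h4

theorem root_no_parent {V : Type} [Fintype V] {T : DirGraph V} {r : V} (hT : T.IsOutTree r)
    (u : V) : (u, r) ∉ T.arcs := by
  intro hu
  have h := hT.root_indeg
  rw [inDeg, Set.ncard_eq_zero (Set.toFinite _)] at h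
  have h4 : (u, r) ∈ {a ∈ T.arcs | a.2 = r} := ⟨hu, rfl⟩
  rw [h] at h4
  exact h4

theorem leaf_no_child {V : Type} [Fintype V] {T : DirGraph V} {v : V} (hv : v ∈ leaves T)
    (u : V) : (v, u) ∉ T.arcs := by
  intro hu
  have h := hv.2
  rw [outDeg, Set.ncard_eq_zero (Set.toFinite _)] at h
  have h4 : (v, u) ∈ {a ∈ T.arcs | a.1 = v} := ⟨hu, rfl⟩
  rw [h] at h4
  exact h4

/-- In a digraph without useless arcs, the tail of an arc can be reached avoiding its head. -/
theorem avoid_head {V : Type} [Fintype V] (D : DirGraph V)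
    (hu : ∀ a ∈ D.arcs, ¬ Useless D a) (r : V) (hr : r ∈ D.verts)
    (hreach : ∀ v ∈ D.verts, ReflTransGen (fun a b => (a, b) ∈ D.arcs) r v)
    (w v : V) (hwv : (w, v) ∈ D.arcs)
    (hv : ¬ ReflTransGen (fun a b => (a, b) ∈ D.arcs) v r) : Av D {v} r w := by
  have h := hu _ hwv
  unfold Useless at h
  push Not at h
  obtain ⟨B, r', ⟨⟨hB, hBs⟩, hBv⟩, hwB⟩ := h
  have hlift : ∀ a b, (a, b) ∈ B.arcs → (a, b) ∈ D.arcs := fun a b h => hBs.2 h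
  have hvr : v ≠ r' := by
    rintro rfl
    exact root_no_parent hB _ hwB
  have hvB : v ∈ B.verts := (hB.arcs_mem _ hwB).2
  have h1 : Av D {v} r' w := by
    obtain ⟨u0, _, hu0⟩ := exists_parent hB hvB hvr
    have hr'v := reach_of_reaches (hB.reach_root v hvB)
    rcases first_hit v hr'v with h | ⟨u, h, huv⟩
    · cases h with
      | refl => exact absurd rfl hvr
      | tail _ h => exact absurd rfl h.2
    · have : u = w := (hu0 u huv).trans (hu0 w hwB).symm
      subst this
      exact rtg_mono (fun a b h => ⟨hlift a b h.1, h.2⟩) h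
  have hr'r : ReflTransGen (fun a b => (a, b) ∈ D.arcs) r' r :=
    rtg_mono hlift (reach_of_reaches (hB.reach_root r (hBv ▸ hr)))
  have hrr' := hreach r' (hBs.1 hB.root_mem)
  rcases split_at v hrr' with h | h
  · exact ReflTransGen.trans h h1
  · exact absurd (h.trans hr'r) hv

theorem ear_set {V : Type} [DecidableEq V] (D : DirGraph V) (P : Set V) (w d : V → ℕ) (D0 : ℕ)
    (hd : ∀ u v, (u, v) ∈ D.arcs → d v ≤ d u + w v) (q v : V) (hq : d q ≤ D0 + w q)
    (h : Av D P q v) :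
    ∃ E : Finset V, v ∈ E ∧ (∀ e ∈ E, Av D P q e ∧ Av D P e v) ∧
      ∀ e ∈ E, d e ≤ D0 + ∑ i ∈ E, w i := by
  induction h with
  | refl =>
    refine ⟨{q}, by simp, ?_, ?_⟩
    · intro e he
      simp at he
      subst he
      exact ⟨.refl, .refl⟩
    · intro e he
      simp at he
      subst he
      simpa using hq
  | @tail b c hb hbc ih =>
    obtain ⟨E, h1, h2, h3⟩ := ih
    by_cases hc : c ∈ E
    · exact ⟨E, hc, fun e he => ⟨(h2 e he).1, ReflTransGen.tail (h2 e he).2 hbc⟩, h3⟩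
    · refine ⟨insert c E, by simp, ?_, ?_⟩
      · intro e he
        rcases Finset.mem_insert.1 he with rfl | he
        · exact ⟨ReflTransGen.tail hb hbc, .refl⟩
        · exact ⟨(h2 e he).1, ReflTransGen.tail (h2 e he).2 hbc⟩
      · intro e he
        rw [Finset.sum_insert hc]
        have h4 := hd b c hbc.1
        have h5 := h3 b h1
        rcases Finset.mem_insert.1 he with rfl | he
        · omega
        · have := h3 e he
          omega

/-- There is an off-path ear jumping over each break vertex of the path. -/
theorem ear_exists {V : Type} (D : DirGraph V) (n : ℕ) (p : ℕ → V) (P : Set V)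
    (hP : ∀ v, v ∈ P ↔ ∃ i ≤ n, p i = v)
    (hshort : ∀ b ≤ n, ∀ c ≤ n, (p b, p c) ∈ D.arcs → c ≤ b + 1)
    (t : ℕ) (ht : 1 ≤ t) (htn : t ≤ n) (w : V) (hw : (w, p t) ∈ D.arcs) (hwt : w ≠ p (t - 1))
    (hav : Av D {p t} (p 0) w) :
    ∃ b q v c, b < t ∧ t ≤ c ∧ c ≤ n ∧ q ∉ P ∧ (p b, q) ∈ D.arcs ∧ Av D P q v ∧
      (v, p c) ∈ D.arcs := by
  by_contra hno
  have key : ∀ y, Av D {p t} (p 0) y → (∃ b < t, y = p b) ∨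
      ∃ b q, b < t ∧ q ∉ P ∧ (p b, q) ∈ D.arcs ∧ Av D P q y := by
    intro y hy
    induction hy with
    | refl => exact .inl ⟨0, ht, rfl⟩
    | @tail y z _ hyz ih =>
      by_cases hz : z ∈ P
      · obtain ⟨c, hc, rfl⟩ := (hP z).1 hz
        by_cases hct : c < t
        · exact .inl ⟨c, hct, rfl⟩
        · exfalso
          have hne : c ≠ t := by
            rintro rfl
            exact hyz.2 rfl
          rcases ih with ⟨b, hb, rfl⟩ | ⟨b, q, hb, hq, hbq, hqy⟩
          · have := hshort b (by omega) c hc hyz.1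
            omega
          · exact hno ⟨b, q, y, c, hb, by omega, hc, hq, hbq, hqy, hyz.1⟩
      · right
        rcases ih with ⟨b, hb, rfl⟩ | ⟨b, q, hb, hq, hbq, hqy⟩
        · exact ⟨b, z, hb, hz, hyz.1, .refl⟩
        · exact ⟨b, q, hb, hq, hbq, ReflTransGen.tail hqy ⟨hyz.1, hz⟩⟩
  rcases key w hav with ⟨b, hb, rfl⟩ | ⟨b, q, hb, hq, hbq, hqy⟩
  · have := hshort b (by omega) t htn hw
    have : b = t - 1 := by omega
    exact hwt (by rw [this])
  · exact hno ⟨b, q, w, t, hb, le_rfl, htn, hq, hbq, hqy, hw⟩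

open Classical in
/-- The counting heart of the proof. -/
theorem count_main {V : Type} [Fintype V] (D T : DirGraph V) (L : Set V) (hLT : ∀ v ∈ L, v ∈ T.verts)
    (hTarc : ∀ a ∈ T.arcs, a.1 ∈ T.verts ∧ a.2 ∈ T.verts)
    (hLc : ∀ v ∈ L, ∀ u, (v, u) ∉ T.arcs)
    (n : ℕ) (p : ℕ → V) (P : Set V)
    (hP : ∀ v, v ∈ P ↔ ∃ i ≤ n, p i = v) (d w : V → ℕ)
    (hw : ∀ v, w v = 1 + (if v ∈ L then Fintype.card V + 1 else 0))
    (hd : ∀ u v, (u, v) ∈ D.arcs → d v ≤ d u + w v)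
    (hpd : ∀ i < n, d (p (i + 1)) = d (p i) + w (p (i + 1)))
    (hpar : ∀ t, 1 ≤ t → t < n → p t ∈ T.verts → (p (t - 1), p t) ∉ T.arcs →
      ∃ u, (u, p t) ∈ D.arcs ∧ u ≠ p (t - 1) ∧ Av D {p t} (p 0) u)
    (t : ℕ) (ht : 1 ≤ t) (hbreak : t ≤ n → (p (t - 1), p t) ∉ T.arcs) :
    ((Finset.Icc t n).filter (fun i => p i ∈ L)).card ≤
      (Finset.univ.filter (fun q => q ∉ P ∧ (∃ b ≤ n, (p b, q) ∈ D.arcs) ∧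
        ∃ c, t ≤ c ∧ c ≤ n ∧ ∃ v, Av D P q v ∧ (v, p c) ∈ D.arcs)).card +
      (Finset.univ.filter (fun q => q ∉ P ∧ q ∈ L ∧
        ∃ c, t ≤ c ∧ c ≤ n ∧ ∃ v, Av D P q v ∧ (v, p c) ∈ D.arcs)).card + 1 := by
  have hsum : ∀ b c, b < c → c ≤ n → d (p c) = d (p b) + ∑ i ∈ Finset.Ioo b c, w (p i) + w (p c) := by
    intro b c hbc
    induction c, hbc using Nat.le_induction with
    | base =>
      intro h
      have : Finset.Ioo b (b + 1) = ∅ := by ext i; simp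
      rw [show b.succ = b + 1 from rfl, this, hpd b (by omega)]
      simp
    | succ c hc ih =>
      intro h
      have h1 := ih (by omega)
      have h2 : Finset.Ioo b (c + 1) = insert c (Finset.Ioo b c) := by
        ext i
        simp
        omega
      rw [hpd c (by omega), h1, h2, Finset.sum_insert (by simp)]
      omega
  have hw1 : ∀ v, 1 ≤ w v := fun v => by rw [hw]; omega
  have hshort : ∀ b ≤ n, ∀ c ≤ n, (p b, p c) ∈ D.arcs → c ≤ b + 1 := by
    intro b hb c hc h
    by_contra hlt
    have h1 := hsum b c (by omega) hc
    have h2 := hd _ _ h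
    have h3 : w (p (b + 1)) ≤ ∑ i ∈ Finset.Ioo b c, w (p i) :=
      Finset.single_le_sum (f := fun i => w (p i)) (fun _ _ => Nat.zero_le _) (by simp; omega)
    have := hw1 (p (b + 1))
    omega
  have hws : ∀ {ι : Type} (s : Finset ι) (f : ι → V), ∑ i ∈ s, w (f i) =
      s.card + (s.filter (fun i => f i ∈ L)).card * (Fintype.card V + 1) := by
    intro ι s f
    simp only [hw, Finset.sum_add_distrib, Finset.sum_const, smul_eq_mul, mul_one,
      ← Finset.sum_filter]
    try ring
  induction hm : n + 1 - t using Nat.strong_induction_on generalizing t with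
  | _ m ih =>
    rcases Nat.lt_or_ge n t with hnt | htn
    · rw [Finset.Icc_eq_empty (by omega)]
      simp
    rcases Nat.eq_or_lt_of_le htn with rfl | htn'
    · refine (Finset.card_filter_le _ _).trans ?_
      simp
    by_cases hpt : p t ∈ T.verts
    · obtain ⟨u, hu1, hu2, hu3⟩ := hpar t ht htn' hpt (hbreak htn)
      have hear := ear_exists D n p P hP hshort t ht htn u hu1 hu2 hu3
      let X : Set ℕ := {c | ∃ b q v, b < t ∧ t ≤ c ∧ c ≤ n ∧ q ∉ P ∧ (p b, q) ∈ D.arcs ∧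
        Av D P q v ∧ (v, p c) ∈ D.arcs}
      have hXne : X.Nonempty := by
        obtain ⟨b, q, v, c, h⟩ := hear
        exact ⟨c, b, q, v, h⟩
      have hXb : BddAbove X := ⟨n, by rintro c ⟨b, q, v, h⟩; exact h.2.2.1⟩
      have hmem := Nat.sSup_mem hXne hXb
      have hmax : ∀ c ∈ X, c ≤ sSup X := fun c hc => le_csSup hXb hc
      generalize sSup X = c at hmem hmax
      obtain ⟨b, q, v, hbt, htc, hcn, hqP, hbq, hqv, hvc⟩ := hmem
      have hex : ∃ s, c < s ∧ (s ≤ n → (p (s - 1), p s) ∉ T.arcs) := ⟨n + 1, by omega, by omega⟩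
      obtain ⟨t', ⟨hct', hbreak'⟩, hmin⟩ : ∃ s, (c < s ∧ (s ≤ n → (p (s - 1), p s) ∉ T.arcs)) ∧
          ∀ s' < s, c < s' → s' ≤ n ∧ (p (s' - 1), p s') ∈ T.arcs := by
        refine ⟨Nat.find hex, Nat.find_spec hex, ?_⟩
        intro s' hs' hcs'
        have := Nat.find_min hex hs'
        push Not at this
        exact this hcs'
      obtain ⟨E, hvE, hE1, hE2⟩ := ear_set D P w d (d (p b)) hd q v (hd _ _ hbq) hqv
      have hEP : ∀ e ∈ E, e ∉ P := fun e he => (hE1 e he).1.not_mem hqP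
      -- elements of `E` reach exactly up to `c`
      have hEc : ∀ e, Av D P q e → ∀ c', t' ≤ c' → c' ≤ n →
          ¬ ∃ v, Av D P e v ∧ (v, p c') ∈ D.arcs := by
        rintro e he c' h1 h2 ⟨v', h3, h4⟩
        have := hmax c' ⟨b, q, v', hbt, by omega, h2, hqP, hbq, ReflTransGen.trans he h3, h4⟩
        omega
      -- the number of leaves jumped over
      have hjump : ((Finset.Ioo b c).filter (fun i => p i ∈ L)).card ≤
          (E.filter (fun e => e ∈ L)).card := by
        have h1 := hsum b c (by omega) hcn
        have h2 := hE2 v hvE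
        have h3 := hd _ _ hvc
        have h4 := hws (Finset.Ioo b c) p
        have h5 := hws E id
        simp only [id] at h5
        have h6 : E.card ≤ Fintype.card V := Finset.card_le_univ E
        by_contra hlt
        push Not at hlt
        have h7 := Nat.mul_le_mul_right (Fintype.card V + 1) (Nat.succ_le_of_lt hlt)
        rw [Nat.succ_mul] at h7
        omega
      have hsplit : (Finset.Icc t n).filter (fun i => p i ∈ L) ⊆
          (Finset.Ioo b c).filter (fun i => p i ∈ L) ∪ {t' - 1} ∪
            (Finset.Icc t' n).filter (fun i => p i ∈ L) := by
        intro i hi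
        simp only [Finset.mem_filter, Finset.mem_Icc] at hi
        simp only [Finset.mem_union, Finset.mem_filter, Finset.mem_Icc, Finset.mem_Ioo,
          Finset.mem_singleton]
        obtain ⟨⟨h1, h2⟩, h3⟩ := hi
        by_cases hic : i < c
        · exact .inl (.inl ⟨⟨by omega, hic⟩, h3⟩)
        by_cases hit : t' ≤ i
        · exact .inr ⟨⟨hit, h2⟩, h3⟩
        · left; right
          by_contra hne
          have := (hmin (i + 1) (by omega) (by omega)).2
          exact hLc _ h3 _ (by simpa using this)
      have hM : ((Finset.Icc t n).filter (fun i => p i ∈ L)).card ≤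
          (E.filter (fun e => e ∈ L)).card + 1 +
            ((Finset.Icc t' n).filter (fun i => p i ∈ L)).card := by
        refine (Finset.card_le_card hsplit).trans ((Finset.card_union_le _ _).trans ?_)
        have := Finset.card_union_le ((Finset.Ioo b c).filter (fun i => p i ∈ L)) {t' - 1}
        rw [Finset.card_singleton] at this
        omega
      have hI := ih (n + 1 - t') (by omega) t' (by omega) hbreak' rfl
      have hN : (Finset.univ.filter (fun q => q ∉ P ∧ (∃ b ≤ n, (p b, q) ∈ D.arcs) ∧
            ∃ c, t' ≤ c ∧ c ≤ n ∧ ∃ v, Av D P q v ∧ (v, p c) ∈ D.arcs)).card + 1 ≤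
          (Finset.univ.filter (fun q => q ∉ P ∧ (∃ b ≤ n, (p b, q) ∈ D.arcs) ∧
            ∃ c, t ≤ c ∧ c ≤ n ∧ ∃ v, Av D P q v ∧ (v, p c) ∈ D.arcs)).card := by
        apply Nat.succ_le_of_lt
        apply Finset.card_lt_card
        rw [Finset.ssubset_iff]
        refine ⟨q, ?_, ?_⟩
        · simp only [Finset.mem_filter, Finset.mem_univ, true_and]
          rintro ⟨-, -, c', h1, h2, h3⟩
          exact hEc q .refl c' h1 h2 h3
        · intro e he
          rcases Finset.mem_insert.1 he with rfl | he
          · simp only [Finset.mem_filter, Finset.mem_univ, true_and]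
            exact ⟨hqP, ⟨b, by omega, hbq⟩, c, htc, hcn, v, hqv, hvc⟩
          · simp only [Finset.mem_filter, Finset.mem_univ, true_and] at he ⊢
            obtain ⟨h1, h2, c', h3, h4⟩ := he
            exact ⟨h1, h2, c', by omega, h4⟩
      have hA : (Finset.univ.filter (fun q => q ∉ P ∧ q ∈ L ∧
            ∃ c, t' ≤ c ∧ c ≤ n ∧ ∃ v, Av D P q v ∧ (v, p c) ∈ D.arcs)).card +
            (E.filter (fun e => e ∈ L)).card ≤
          (Finset.univ.filter (fun q => q ∉ P ∧ q ∈ L ∧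
            ∃ c, t ≤ c ∧ c ≤ n ∧ ∃ v, Av D P q v ∧ (v, p c) ∈ D.arcs)).card := by
        rw [← Finset.card_union_of_disjoint]
        · apply Finset.card_le_card
          intro e he
          rcases Finset.mem_union.1 he with he | he
          · simp only [Finset.mem_filter, Finset.mem_univ, true_and] at he ⊢
            obtain ⟨h1, h2, c', h3, h4⟩ := he
            exact ⟨h1, h2, c', by omega, h4⟩
          · simp only [Finset.mem_filter, Finset.mem_univ, true_and] at he ⊢
            exact ⟨hEP e he.1, he.2, c, htc, hcn, v, (hE1 e he.1).2, hvc⟩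
        · rw [Finset.disjoint_left]
          intro e he he'
          simp only [Finset.mem_filter, Finset.mem_univ, true_and] at he he'
          obtain ⟨-, -, c', h1, h2, h3⟩ := he
          exact hEc e (hE1 e he'.1).1 c' h1 h2 h3
      omega
    · have hI := ih (n + 1 - (t + 1)) (by omega) (t + 1) (by omega)
        (fun _ h => hpt (hTarc _ h).1) rfl
      have hM : (Finset.Icc t n).filter (fun i => p i ∈ L) ⊆
          (Finset.Icc (t + 1) n).filter (fun i => p i ∈ L) := by
        intro i hi
        simp only [Finset.mem_filter, Finset.mem_Icc] at hi ⊢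
        have : i ≠ t := by
          rintro rfl
          exact hpt (hLT _ hi.2)
        exact ⟨⟨by omega, hi.1.2⟩, hi.2⟩
      refine (Finset.card_le_card hM).trans (hI.trans ?_)
      gcongr <;> omega

/-- Leaves of the out-tree that are off the path can all be kept. -/
theorem optA {V : Type} [Fintype V] (D : DirGraph V) (hD : D.WellFormed) (r : V)
    (hr : r ∈ D.verts) (hreach : ∀ v ∈ D.verts, ReflTransGen (fun a b => (a, b) ∈ D.arcs) r v)
    (T : DirGraph V) (x : V) (hT : IsOutTreeOf T D x)
    (n : ℕ) (p : ℕ → V) (P : Set V) (hP : ∀ v, v ∈ P ↔ ∃ i ≤ n, p i = v)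
    (h0 : p 0 = r) (hn : p n = x) (hp : ∀ i < n, (p i, p (i + 1)) ∈ D.arcs) :
    (leaves T \ P).ncard ≤ ellS D := by
  have hpU : ∀ i ≤ n, Av D (leaves T \ P) r (p i) := by
    intro i
    induction i with
    | zero => intro _; rw [h0]; exact .refl
    | succ i ih =>
      intro h
      refine ReflTransGen.tail (ih (by omega)) ⟨hp i (by omega), ?_⟩
      intro hm
      exact hm.2 ((hP _).2 ⟨i + 1, h, rfl⟩)
  have hTU : ∀ y, ReflTransGen (fun a b => (a, b) ∈ T.arcs) x y →
      Av D (leaves T \ P) r y ∨ y ∈ leaves T \ P := by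
    intro y hy
    induction hy with
    | refl => left; rw [← hn]; exact hpU n le_rfl
    | @tail y z _ hyz ih =>
      rcases ih with h | h
      · by_cases hz : z ∈ leaves T \ P
        · exact .inr hz
        · exact .inl (ReflTransGen.tail h ⟨hT.2.2 hyz, hz⟩)
      · exact absurd hyz (leaf_no_child h.1 z)
  refine keyK D hD r hr hreach _ ?_ ?_
  · intro h
    exact h.2 ((hP _).2 ⟨0, by omega, h0⟩)
  · intro s hs
    have hsx : s ≠ x := by
      rintro rfl
      exact hs.2 ((hP _).2 ⟨n, le_rfl, hn⟩)
    obtain ⟨u, hus, -⟩ := exists_parent hT.1 hs.1.1 hsx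
    refine ⟨u, ?_, hT.2.2 hus⟩
    rcases hTU u (reach_of_reaches (hT.1.reach_root u (hT.1.arcs_mem _ hus).1)) with h | h
    · exact h
    · exact absurd hus (leaf_no_child h.1 s)

/-- All out-neighbours of the path that are off the path can be leaves. -/
theorem optB {V : Type} [Fintype V] (D : DirGraph V) (hD : D.WellFormed) (r : V)
    (hr : r ∈ D.verts) (hreach : ∀ v ∈ D.verts, ReflTransGen (fun a b => (a, b) ∈ D.arcs) r v)
    (n : ℕ) (p : ℕ → V) (P : Set V) (hP : ∀ v, v ∈ P ↔ ∃ i ≤ n, p i = v)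
    (h0 : p 0 = r) (hp : ∀ i < n, (p i, p (i + 1)) ∈ D.arcs) :
    {q | q ∉ P ∧ ∃ b ≤ n, (p b, q) ∈ D.arcs}.ncard ≤ ellS D := by
  have hpU : ∀ i ≤ n, Av D {q | q ∉ P ∧ ∃ b ≤ n, (p b, q) ∈ D.arcs} r (p i) := by
    intro i
    induction i with
    | zero => intro _; rw [h0]; exact .refl
    | succ i ih =>
      intro h
      refine ReflTransGen.tail (ih (by omega)) ⟨hp i (by omega), ?_⟩
      intro hm
      exact hm.1 ((hP _).2 ⟨i + 1, h, rfl⟩)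
  refine keyK D hD r hr hreach _ ?_ ?_
  · intro h
    exact h.1 ((hP _).2 ⟨0, by omega, h0⟩)
  · rintro s ⟨_, b, hb, hbs⟩
    exact ⟨p b, hpU b hb, hbs⟩

theorem ellS_ge_of_ell_ge_three_mul {V : Type} [Fintype V]
    (D : DirGraph V) (k : ℕ) (hD : D.WellFormed)
    (hbr : ∃ (T : DirGraph V) (r : V), IsOutBranching T D r)
    (hu : ∀ a ∈ D.arcs, ¬ Useless D a)
    (hk : 3 * k ≤ ell D) : k ≤ ellS D := by
  classical
  rcases Nat.eq_zero_or_pos k with rfl | hk0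
  · exact Nat.zero_le _
  obtain ⟨B, r, hB⟩ := hbr
  have hr : r ∈ D.verts := hB.1.2.1 hB.1.1.root_mem
  have hreach : ∀ v ∈ D.verts, ReflTransGen (fun a b => (a, b) ∈ D.arcs) r v := by
    intro v hv
    exact rtg_mono (fun a b h => hB.1.2.2 h)
      (reach_of_reaches (hB.1.1.reach_root v (hB.2 ▸ hv)))
  obtain ⟨T, x, hT, hTk⟩ : ∃ (T : DirGraph V) (r : V), IsOutTreeOf T D r ∧
      (leaves T).ncard = ell D :=
    Nat.sSup_mem (s := {k | ∃ (T : DirGraph V) (r : V), IsOutTreeOf T D r ∧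
      (leaves T).ncard = k}) ⟨_, B, r, hB.1, rfl⟩ (bdd_aux2 D)
  have hx : x ∈ D.verts := hT.2.1 hT.1.root_mem
  by_cases hxr : ReflTransGen (fun a b => (a, b) ∈ D.arcs) x r
  · have h := optA D hD x hx (fun v hv => hxr.trans (hreach v hv)) T x hT 0 (fun _ => x) {x}
      (by intro v; constructor
          · rintro rfl; exact ⟨0, le_rfl, rfl⟩
          · rintro ⟨_, _, rfl⟩; rfl) rfl rfl (by simp)
    have h2 := Set.ncard_le_ncard_sdiff_add_ncard (leaves T) {x}
    rw [Set.ncard_singleton] at h2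
    omega
  have hTx : ∀ v ∈ T.verts, ¬ ReflTransGen (fun a b => (a, b) ∈ D.arcs) v r := by
    intro v hv h
    exact hxr ((rtg_mono (fun a b h => hT.2.2 h)
      (reach_of_reaches (hT.1.reach_root v hv))).trans h)
  have hrT : r ∉ T.verts := fun h => hTx r h .refl
  obtain ⟨w, hw⟩ : ∃ w : V → ℕ, ∀ v, w v =
      1 + (if v ∈ leaves T then Fintype.card V + 1 else 0) := ⟨_, fun v => rfl⟩
  obtain ⟨d, hd1, hd2⟩ := exists_pot (fun a b => (a, b) ∈ D.arcs) r w
  obtain ⟨n, p, h0, hn, hp⟩ := exists_tight_path _ r w d (fun v => by rw [hw]; omega) hd2 x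
    (hreach x hx)
  set P : Set V := {v | ∃ i ≤ n, p i = v} with hPdef
  have hP : ∀ v, v ∈ P ↔ ∃ i ≤ n, p i = v := fun v => Iff.rfl
  have hA := optA D hD r hr hreach T x hT n p P hP h0 hn (fun i hi => (hp i hi).1)
  have hN := optB D hD r hr hreach n p P hP h0 (fun i hi => (hp i hi).1)
  have hdlt : ∀ j ≤ n, ∀ i < j, d (p i) < d (p j) := by
    intro j
    induction j with
    | zero => intro _ i hi; omega
    | succ j ih =>
      intro hj i hi
      have h1 := (hp j (by omega)).2
      have h2 := hw (p (j + 1))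
      rcases Nat.lt_or_ge i j with h | h
      · have := ih (by omega) i h
        omega
      · have : i = j := by omega
        subst this
        omega
  have hC := count_main D T (leaves T) (fun v hv => hv.1) hT.1.arcs_mem
    (fun v hv u => leaf_no_child hv u) n p P hP d w hw
    (fun u v huv => hd1 u v (hreach u (hD _ huv).1) huv) (fun i hi => (hp i hi).2)
    (by
      intro t ht htn hpt hnot
      have hne : p t ≠ x := by
        intro h
        have := hdlt n le_rfl t htn
        rw [h, hn] at this
        omega
      obtain ⟨u, hut, -⟩ := exists_parent hT.1 hpt hne
      refine ⟨u, hT.2.2 hut, ?_, ?_⟩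
      · rintro rfl
        exact hnot hut
      · rw [h0]
        exact avoid_head D hu r hr hreach u (p t) (hT.2.2 hut) (hTx _ hpt))
    1 le_rfl (fun _ h => hrT (by have := (hT.1.arcs_mem _ h).1; simpa [h0] using this))
  have hM : (leaves T ∩ P).ncard ≤ ((Finset.Icc 1 n).filter (fun i => p i ∈ leaves T)).card := by
    have hsub : leaves T ∩ P ⊆
        ((((Finset.Icc 1 n).filter (fun i => p i ∈ leaves T)).image p : Finset V) : Set V) := by
      rintro v ⟨hv, i, hi, rfl⟩
      have : i ≠ 0 := by
        rintro rfl
        rw [h0] at hv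
        exact hrT hv.1
      simp only [Finset.coe_image, Set.mem_image, Finset.mem_coe, Finset.mem_filter,
        Finset.mem_Icc]
      exact ⟨i, ⟨⟨by omega, hi⟩, hv⟩, rfl⟩
    refine (Set.ncard_le_ncard hsub).trans ?_
    rw [Set.ncard_coe_finset]
    exact Finset.card_image_le
  have hN' : (Finset.univ.filter (fun q => q ∉ P ∧ (∃ b ≤ n, (p b, q) ∈ D.arcs) ∧
        ∃ c, 1 ≤ c ∧ c ≤ n ∧ ∃ v, Av D P q v ∧ (v, p c) ∈ D.arcs)).card ≤
      {q | q ∉ P ∧ ∃ b ≤ n, (p b, q) ∈ D.arcs}.ncard := by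
    rw [← Set.ncard_coe_finset]
    refine Set.ncard_le_ncard ?_ (Set.toFinite _)
    intro q hq
    simp only [Finset.coe_filter, Finset.mem_univ, true_and] at hq
    exact ⟨hq.1, hq.2.1⟩
  have hA' : (Finset.univ.filter (fun q => q ∉ P ∧ q ∈ leaves T ∧
        ∃ c, 1 ≤ c ∧ c ≤ n ∧ ∃ v, Av D P q v ∧ (v, p c) ∈ D.arcs)).card ≤
      (leaves T \ P).ncard := by
    rw [← Set.ncard_coe_finset]
    refine Set.ncard_le_ncard ?_ (Set.toFinite _)
    intro q hq
    simp only [Finset.coe_filter, Finset.mem_univ, true_and] at hq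
    exact ⟨hq.2.1, hq.1⟩
  have hL := Set.ncard_inter_add_ncard_sdiff_eq_ncard (leaves T) P
  have hC' := hC.trans (Nat.add_le_add_right (Nat.add_le_add
    (le_trans (le_of_eq (by congr)) hN') (le_trans (le_of_eq (by congr)) hA')) 1)
  by_contra hlt
  omega

end DirGraph
end

section
/- Let D be a digraph on n vertices with at least one out-branching. If every vertex of D has in-degree at least 3, or if D is an oriented graph in which every vertex has in-degree at least 2, then ℓ(D) ≥ (1/4)·√n. -/
namespace DirGraph

/-- Out-trees presented by a parent function and a rank function. -/
structure PTree {V : Type} (D : DirGraph V) where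
  S : Finset V
  r : V
  π : V → V
  h : V → ℕ
  r_mem : r ∈ S
  sub : ∀ v ∈ S, v ∈ D.verts
  par_mem : ∀ v ∈ S, v ≠ r → π v ∈ S
  arc : ∀ v ∈ S, v ≠ r → (π v, v) ∈ D.arcs
  rank : ∀ v ∈ S, v ≠ r → h (π v) < h v

namespace PTree

open Classical in
/-- The leaves of a parent-function out-tree. -/
noncomputable def lvs {V : Type} {D : DirGraph V} (T : PTree D) : Finset V :=
  T.S.filter (fun x => ∀ b ∈ T.S, b ≠ T.r → T.π b ≠ x)

theorem mem_lvs_iff {V : Type} {D : DirGraph V} (T : PTree D) {x : V} :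
    x ∈ T.lvs ↔ x ∈ T.S ∧ ∀ b ∈ T.S, b ≠ T.r → T.π b ≠ x := by
  classical
  unfold lvs
  rw [Finset.mem_filter]

/-- The parent-child relation. -/
def Step {V : Type} {D : DirGraph V} (T : PTree D) (x y : V) : Prop :=
  y ∈ T.S ∧ y ≠ T.r ∧ T.π y = x

/-- The ancestor relation. -/
def Anc {V : Type} {D : DirGraph V} (T : PTree D) : V → V → Prop :=
  Relation.ReflTransGen T.Step

/-- `x` has at most one child. -/
def Single {V : Type} {D : DirGraph V} (T : PTree D) (x : V) : Prop :=
  ∀ b c, T.Step x b → T.Step x c → b = c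

/-- The corresponding digraph. -/
def toDir {V : Type} {D : DirGraph V} (T : PTree D) : DirGraph V :=
  ⟨T.S, {a | a.2 ∈ T.S ∧ a.2 ≠ T.r ∧ T.π a.2 = a.1}⟩

theorem exists_path {V : Type} {D : DirGraph V} (T : PTree D) (m : ℕ) :
    ∀ v ∈ T.S, T.h v ≤ m → ∃ l : List V, T.toDir.IsDipath l ∧ l.head? = some T.r ∧
      l.getLast? = some v ∧ ∀ x ∈ l, T.h x ≤ T.h v := by
  induction m with
  | zero =>
    intro v hv hm
    have hvr : v = T.r := by
      by_contra hne
      have := T.rank v hv hne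
      omega
    subst hvr
    refine ⟨[T.r], ⟨by simp, by simp, ?_, ?_⟩, by simp, by simp, by simp⟩
    · intro x hx
      simp only [List.mem_singleton] at hx
      subst hx
      exact T.r_mem
    · exact List.isChain_singleton _
  | succ m ih =>
    intro v hv hm
    by_cases hvr : v = T.r
    · subst hvr
      refine ⟨[T.r], ⟨by simp, by simp, ?_, ?_⟩, by simp, by simp, by simp⟩
      · intro x hx
        simp only [List.mem_singleton] at hx
        subst hx
        exact T.r_mem
      · exact List.isChain_singleton _
    · have hr := T.rank v hv hvr
      obtain ⟨l, ⟨h1, h2, h3, h4⟩, h5, h6, h7⟩ := ih (T.π v) (T.par_mem v hv hvr) (by omega)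
      refine ⟨l ++ [v], ⟨by simp, ?_, ?_, ?_⟩, ?_, by simp, ?_⟩
      · rw [List.nodup_append]
        refine ⟨h2, by simp, ?_⟩
        intro a ha b hb hab
        simp only [List.mem_singleton] at hb
        subst hb
        subst hab
        have := h7 a ha
        omega
      · intro x hx
        rw [List.mem_append, List.mem_singleton] at hx
        rcases hx with hx | hx
        · exact h3 x hx
        · subst hx
          exact hv
      · refine List.IsChain.append h4 (List.isChain_singleton _) ?_
        intro x hx y hy
        rw [h6] at hx
        simp only [Option.mem_def, Option.some.injEq, List.head?_cons] at hx hy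
        subst hx
        subst hy
        exact ⟨hv, hvr, rfl⟩
      · rw [List.head?_append, h5]
        rfl
      · intro x hx
        rw [List.mem_append, List.mem_singleton] at hx
        rcases hx with hx | hx
        · have := h7 x hx
          omega
        · subst hx
          exact le_rfl

theorem toDir_isOutTreeOf {V : Type} {D : DirGraph V} (T : PTree D) :
    IsOutTreeOf T.toDir D T.r := by
  refine ⟨⟨?_, T.r_mem, ?_, ?_, ?_⟩, ?_, ?_⟩
  · rintro ⟨a, b⟩ ⟨h1, h2, h3⟩
    simp only at h1 h2 h3
    subst h3
    exact ⟨T.par_mem b h1 h2, h1⟩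
  · have : {a ∈ T.toDir.arcs | a.2 = T.r} = ∅ := by
      ext ⟨a, b⟩
      simp only [Set.mem_ofPred_eq, Set.mem_empty_iff_false, iff_false]
      rintro ⟨⟨h1, h2, h3⟩, h4⟩
      exact h2 h4
    unfold inDeg
    rw [this, Set.ncard_empty]
  · intro v hv hvr
    have : {a ∈ T.toDir.arcs | a.2 = v} = {(T.π v, v)} := by
      ext ⟨a, b⟩
      simp only [Set.mem_ofPred_eq, Set.mem_singleton_iff, Prod.mk.injEq]
      constructor
      · rintro ⟨⟨h1, h2, h3⟩, h4⟩
        subst h4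
        exact ⟨h3.symm, rfl⟩
      · rintro ⟨h1, h2⟩
        subst h1
        subst h2
        exact ⟨⟨hv, hvr, rfl⟩, rfl⟩
    unfold inDeg
    rw [this, Set.ncard_singleton]
  · intro v hv
    obtain ⟨l, h1, h2, h3, -⟩ := T.exists_path (T.h v) v hv le_rfl
    exact ⟨l, h1, h2, h3⟩
  · intro v hv
    exact T.sub v hv
  · rintro ⟨a, b⟩ ⟨h1, h2, h3⟩
    simp only at h1 h2 h3
    subst h3
    exact T.arc b h1 h2

theorem leaves_toDir {V : Type} [Fintype V] {D : DirGraph V} (T : PTree D) :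
    leaves T.toDir = (T.lvs : Set V) := by
  classical
  ext x
  unfold leaves outDeg
  rw [Set.mem_ofPred_eq, Set.ncard_eq_zero (Set.toFinite _), Finset.mem_coe, mem_lvs_iff,
    Set.eq_empty_iff_forall_notMem]
  constructor
  · rintro ⟨h1, h2⟩
    refine ⟨h1, ?_⟩
    intro b hb hbr hbx
    exact h2 (x, b) ⟨⟨hb, hbr, hbx⟩, rfl⟩
  · rintro ⟨h1, h2⟩
    refine ⟨h1, ?_⟩
    rintro ⟨a, b⟩ ⟨⟨h3, h4, h5⟩, h6⟩
    simp only at h3 h4 h5 h6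
    exact h2 b h3 h4 (h5.trans h6)

theorem card_lvs_le {V : Type} [Fintype V] {D : DirGraph V} (T : PTree D) :
    T.lvs.card ≤ ell D := by
  apply le_csSup
  · refine ⟨Fintype.card V, ?_⟩
    rintro k ⟨T', r', -, rfl⟩
    rw [← Nat.card_eq_fintype_card]
    exact Set.ncard_le_card _
  · refine ⟨T.toDir, T.r, T.toDir_isOutTreeOf, ?_⟩
    rw [leaves_toDir, Set.ncard_coe_finset]

theorem anc_root {V : Type} {D : DirGraph V} (T : PTree D) (m : ℕ) :
    ∀ v ∈ T.S, T.h v ≤ m → T.Anc T.r v := by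
  induction m with
  | zero =>
    intro v hv hm
    have hvr : v = T.r := by
      by_contra hne
      have := T.rank v hv hne
      omega
    subst hvr
    exact Relation.ReflTransGen.refl
  | succ m ih =>
    intro v hv hm
    by_cases hvr : v = T.r
    · subst hvr
      exact Relation.ReflTransGen.refl
    · have hr := T.rank v hv hvr
      exact (ih (T.π v) (T.par_mem v hv hvr) (by omega)).tail ⟨hv, hvr, rfl⟩

theorem anc_parent {V : Type} {D : DirGraph V} (T : PTree D) {v b : V}
    (hb : b ≠ v) (h : T.Anc v b) : T.Anc v (T.π b) ∧ b ≠ T.r := by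
  rcases Relation.ReflTransGen.cases_tail h with h | ⟨c, hc, h1, h2, h3⟩
  · exact absurd h hb
  · rw [h3]
    exact ⟨hc, h2⟩

theorem anc_h {V : Type} {D : DirGraph V} (T : PTree D) {v b : V}
    (h : T.Anc v b) : T.h v ≤ T.h b := by
  induction h with
  | refl => exact le_rfl
  | tail _ h2 ih =>
    obtain ⟨h3, h4, h5⟩ := h2
    have := T.rank _ h3 h4
    rw [h5] at this
    omega

theorem anc_mem {V : Type} {D : DirGraph V} (T : PTree D) {v b : V} (hv : v ∈ T.S)
    (h : T.Anc v b) : b ∈ T.S := by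
  rcases Relation.ReflTransGen.cases_tail h with h | ⟨c, hc, h1, h2, h3⟩
  · rw [h]
    exact hv
  · exact h1

open Classical in
/-- The 1-change of a tree. -/
noncomputable def change {V : Type} {D : DirGraph V} (T : PTree D) (u v : V)
    (hu : u ∈ T.S) (huv : (u, v) ∈ D.arcs) (hn : ¬ T.Anc v u) : PTree D where
  S := T.S
  r := T.r
  π := fun b => if b = v then u else T.π b
  h := fun b => if T.Anc v b then T.h b + T.h u + 1 else T.h b
  r_mem := T.r_mem
  sub := T.sub
  par_mem := by
    intro b hb hbr
    split_ifs with h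
    · exact hu
    · exact T.par_mem b hb hbr
  arc := by
    intro b hb hbr
    split_ifs with h
    · subst h
      exact huv
    · exact T.arc b hb hbr
  rank := by
    intro b hb hbr
    by_cases hbv : b = v
    · subst hbv
      have : T.Anc b b := Relation.ReflTransGen.refl
      simp only [if_true, hn, this, if_false]
      omega
    · simp only [hbv, if_false]
      have hr := T.rank b hb hbr
      by_cases h1 : T.Anc v b
      · have h2 := (T.anc_parent hbv h1).1
        simp only [h1, h2, if_true]
        omega
      · have h2 : ¬ T.Anc v (T.π b) := fun h => h1 (h.tail ⟨hb, hbr, rfl⟩)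
        simp only [h1, h2, if_false]
        omega

/-- Local optimality: non-tree arcs between non-related vertices leave from leaves. -/
theorem leaf_of_opt {V : Type} {D : DirGraph V} (T : PTree D)
    (hopt : ∀ T' : PTree D, T'.S = T.S → T'.lvs.card ≤ T.lvs.card)
    {u v : V} (hu : u ∈ T.S) (hv : v ∈ T.S) (hvr : v ≠ T.r) (huv : (u, v) ∈ D.arcs)
    (hn : ¬ T.Anc v u) (hup : u ≠ T.π v) (hs : T.Single (T.π v)) : u ∈ T.lvs := by
  classical
  by_contra hul
  have hle := hopt (T.change u v hu huv hn) rfl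
  have hnot : T.π v ∉ T.lvs := by
    unfold lvs
    rw [Finset.mem_filter]
    rintro ⟨-, h⟩
    exact h v hv hvr rfl
  have hsub : insert (T.π v) T.lvs ⊆ (T.change u v hu huv hn).lvs := by
    intro x hx
    rw [Finset.mem_insert] at hx
    unfold lvs
    rw [Finset.mem_filter]
    rcases hx with hx | hx
    · subst hx
      refine ⟨T.par_mem v hv hvr, ?_⟩
      intro b hb hbr
      change (if b = v then u else T.π b) ≠ T.π v
      split_ifs with h
      · exact hup
      · intro h2
        exact h (hs b v ⟨hb, hbr, h2⟩ ⟨hv, hvr, rfl⟩)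
    · have hx' := hx
      unfold lvs at hx'
      rw [Finset.mem_filter] at hx'
      refine ⟨hx'.1, ?_⟩
      intro b hb hbr
      change (if b = v then u else T.π b) ≠ x
      split_ifs with h
      · rintro rfl
        exact hul hx
      · exact hx'.2 b hb hbr
  have := Finset.card_le_card hsub
  rw [Finset.card_insert_of_notMem hnot] at this
  omega

end PTree

/-- A greedy three-colouring. -/
theorem exists_three_col (f g : ℕ → ℕ) (q m : ℕ) : ∃ col : ℕ → Fin 3,
    ∀ c, c < q → q ≤ c + m → c < f c → c < g c → col c ≠ col (f c) ∧ col c ≠ col (g c) := by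
  induction m with
  | zero => exact ⟨fun _ => 0, fun c h1 h2 => by omega⟩
  | succ m ih =>
    obtain ⟨col, hcol⟩ := ih
    by_cases hq : q < m + 1
    · refine ⟨col, fun c h1 h2 => hcol c h1 (by omega)⟩
    · obtain ⟨x, hx⟩ : ∃ x : Fin 3, x ≠ col (f (q - (m + 1))) ∧ x ≠ col (g (q - (m + 1))) := by
        generalize col (f (q - (m + 1))) = a
        generalize col (g (q - (m + 1))) = b
        revert a b
        decide
      refine ⟨Function.update col (q - (m + 1)) x, ?_⟩
      intro c h1 h2 h3 h4
      rw [Function.update_of_ne (a := f c) (by omega), Function.update_of_ne (a := g c) (by omega)]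
      by_cases hc : c = q - (m + 1)
      · subst hc
        rw [Function.update_self]
        exact hx
      · rw [Function.update_of_ne hc]
        exact hcol c h1 (by omega) h3 h4

open Classical in
/-- Extending a base tree along a path: counting leaves for a given set `C` of switched indices. -/
theorem extend_count {V : Type} [Fintype V] {D : DirGraph V} (hD : D.WellFormed) (B : PTree D)
    (q : ℕ) (w : ℕ → V) (hinj : ∀ i < q, ∀ j < q, w i = w j → i = j)
    (hB : ∀ i < q, w i ∉ B.S) (harc : ∀ i, i + 1 < q → (w (i + 1), w i) ∈ D.arcs)
    (X C : Finset ℕ) (hX : ∀ j ∈ X, j < q) (pv : ℕ → V)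
    (hpa : ∀ j ∈ X, (pv j, w j) ∈ D.arcs)
    (hpv : ∀ j ∈ X, pv j ∈ B.S ∨ ∃ i ∈ X, i + 2 ≤ j ∧ pv j = w i)
    (hC1 : ∀ c ∈ C, c + 1 ∉ C)
    (hC2 : ∀ c ∈ C, c + 1 ∈ X ∧ ∃ j ∈ X \ C, pv j = w (c + 1)) :
    (X ∪ C).card ≤ ell D + (X.filter (fun i => ∃ j ∈ X \ C, pv j = w i)).card := by
  have hq : ∀ j ∈ X ∪ C, j < q := by
    intro j hj
    rcases Finset.mem_union.1 hj with hj | hj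
    · exact hX j hj
    · have := hX _ (hC2 j hj).1
      omega
  have hwinj : Set.InjOn w (X ∪ C : Finset ℕ) := by
    intro i hi j hj hij
    exact hinj i (hq i hi) j (hq j hj) hij
  have hwv : ∀ j ∈ X ∪ C, w j ∈ D.verts := by
    intro j hj
    rcases Finset.mem_union.1 hj with hj | hj
    · exact (hD _ (hpa j hj)).2.1
    · have := hX _ (hC2 j hj).1
      exact (hD _ (harc j (by omega))).2.1
  -- index function
  obtain ⟨idx, hidx⟩ : ∃ idx : V → ℕ, ∀ j ∈ X ∪ C, idx (w j) = j := by
    refine ⟨Function.invFunOn w (X ∪ C : Finset ℕ), ?_⟩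
    intro j hj
    exact hwinj.leftInvOn_invFunOn hj
  obtain ⟨H, hH⟩ : ∃ H : ℕ, ∀ v, B.h v ≤ H :=
    ⟨Finset.univ.sup B.h, fun v => Finset.le_sup (Finset.mem_univ v)⟩
  let par : V → V := fun v => if v ∈ B.S then B.π v else
    if idx v ∈ C then w (idx v + 1) else pv (idx v)
  let rk : V → ℕ := fun v => if v ∈ B.S then B.h v else
    if idx v ∈ C then H + 1 + (2 * idx v + 3) else H + 1 + 2 * idx v
  have hpB : ∀ v ∈ B.S, par v = B.π v := fun v hv => by simp only [par, hv, if_true]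
  have hrB : ∀ v ∈ B.S, rk v = B.h v := fun v hv => by simp only [rk, hv, if_true]
  have hpC : ∀ j ∈ C, par (w j) = w (j + 1) := by
    intro j hj
    have hj' : j ∈ X ∪ C := Finset.mem_union_right _ hj
    simp only [par, hB j (hq j hj'), if_false, hidx j hj', hj, if_true]
  have hrC : ∀ j ∈ C, rk (w j) = H + 1 + (2 * j + 3) := by
    intro j hj
    have hj' : j ∈ X ∪ C := Finset.mem_union_right _ hj
    simp only [rk, hB j (hq j hj'), if_false, hidx j hj', hj, if_true]
  have hpX : ∀ j ∈ X, j ∉ C → par (w j) = pv j := by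
    intro j hj hjC
    have hj' : j ∈ X ∪ C := Finset.mem_union_left _ hj
    simp only [par, hB j (hq j hj'), if_false, hidx j hj', hjC]
  have hrX : ∀ j ∈ X, j ∉ C → rk (w j) = H + 1 + 2 * j := by
    intro j hj hjC
    have hj' : j ∈ X ∪ C := Finset.mem_union_left _ hj
    simp only [rk, hB j (hq j hj'), if_false, hidx j hj', hjC]
  have hcases : ∀ v ∈ B.S ∪ (X ∪ C).image w, v ∈ B.S ∨ (∃ j ∈ C, v = w j) ∨
      (∃ j ∈ X, j ∉ C ∧ v = w j) := by
    intro v hv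
    rcases Finset.mem_union.1 hv with hv | hv
    · exact Or.inl hv
    · obtain ⟨j, hj, rfl⟩ := Finset.mem_image.1 hv
      by_cases hjC : j ∈ C
      · exact Or.inr (Or.inl ⟨j, hjC, rfl⟩)
      · rcases Finset.mem_union.1 hj with hj | hj
        · exact Or.inr (Or.inr ⟨j, hj, hjC, rfl⟩)
        · exact absurd hj hjC
  have hmemX : ∀ i ∈ X, w i ∈ B.S ∪ (X ∪ C).image w := fun i hi =>
    Finset.mem_union_right _ (Finset.mem_image_of_mem w (Finset.mem_union_left _ hi))
  let T : PTree D :=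
    { S := B.S ∪ (X ∪ C).image w
      r := B.r
      π := par
      h := rk
      r_mem := Finset.mem_union_left _ B.r_mem
      sub := by
        intro v hv
        rcases Finset.mem_union.1 hv with hv | hv
        · exact B.sub v hv
        · obtain ⟨j, hj, rfl⟩ := Finset.mem_image.1 hv
          exact hwv j hj
      par_mem := by
        intro v hv hvr
        rcases hcases v hv with hv | ⟨j, hj, rfl⟩ | ⟨j, hj, hjC, rfl⟩
        · rw [hpB v hv]
          exact Finset.mem_union_left _ (B.par_mem v hv hvr)
        · rw [hpC j hj]
          exact hmemX _ (hC2 j hj).1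
        · rw [hpX j hj hjC]
          rcases hpv j hj with h | ⟨i, hi, -, h⟩
          · exact Finset.mem_union_left _ h
          · rw [h]
            exact hmemX i hi
      arc := by
        intro v hv hvr
        rcases hcases v hv with hv | ⟨j, hj, rfl⟩ | ⟨j, hj, hjC, rfl⟩
        · rw [hpB v hv]
          exact B.arc v hv hvr
        · rw [hpC j hj]
          exact harc j (hX _ (hC2 j hj).1)
        · rw [hpX j hj hjC]
          exact hpa j hj
      rank := by
        intro v hv hvr
        rcases hcases v hv with hv | ⟨j, hj, rfl⟩ | ⟨j, hj, hjC, rfl⟩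
        · rw [hpB v hv, hrB v hv, hrB _ (B.par_mem v hv hvr)]
          exact B.rank v hv hvr
        · rw [hpC j hj, hrC j hj, hrX _ (hC2 j hj).1 (hC1 j hj)]
          omega
        · rw [hpX j hj hjC, hrX j hj hjC]
          rcases hpv j hj with h | ⟨i, hi, hij, h⟩
          · rw [hrB _ h]
            have := hH (pv j)
            omega
          · rw [h]
            by_cases hiC : i ∈ C
            · rw [hrC i hiC]
              omega
            · rw [hrX i hi hiC]
              omega }
  have hT : ((X ∪ C) \ X.filter (fun i => ∃ j ∈ X \ C, pv j = w i)).image w ⊆ T.lvs := by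
    intro x hx
    obtain ⟨i, hi, rfl⟩ := Finset.mem_image.1 hx
    rw [Finset.mem_sdiff, Finset.mem_filter] at hi
    obtain ⟨hi1, hi2⟩ := hi
    rw [PTree.mem_lvs_iff]
    refine ⟨Finset.mem_union_right _ (Finset.mem_image_of_mem w hi1), ?_⟩
    intro b hb hbr
    change par b ≠ w i
    rcases hcases b hb with hb | ⟨j, hj, rfl⟩ | ⟨j, hj, hjC, rfl⟩
    · rw [hpB b hb]
      intro h
      apply hB i (hq i hi1)
      rw [← h]
      exact B.par_mem b hb hbr
    · rw [hpC j hj]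
      intro h
      have h2 := hC2 j hj
      have := hinj _ (hX _ h2.1) _ (hq i hi1) h
      subst this
      exact hi2 h2
    · rw [hpX j hj hjC]
      intro h
      rcases hpv j hj with h3 | ⟨i', hi', hij, h3⟩
      · rw [h] at h3
        exact hB i (hq i hi1) h3
      · have := hinj _ (hX _ hi') _ (hq i hi1) (h3.symm.trans h)
        subst this
        exact hi2 ⟨hi', j, Finset.mem_sdiff.2 ⟨hj, hjC⟩, h⟩
  have h1 := (Finset.card_le_card hT).trans T.card_lvs_le
  rw [Finset.card_image_of_injOn] at h1
  · have h2 := Finset.le_card_sdiff (X.filter (fun i => ∃ j ∈ X \ C, pv j = w i)) (X ∪ C)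
    omega
  · intro i hi j hj hij
    exact hwinj (Finset.mem_sdiff.1 hi).1 (Finset.mem_sdiff.1 hj).1 hij

theorem extend_bound {V : Type} [Fintype V] {D : DirGraph V} (hD : D.WellFormed) (B : PTree D)
    (q : ℕ) (w : ℕ → V) (hinj : ∀ i < q, ∀ j < q, w i = w j → i = j)
    (hB : ∀ i < q, w i ∉ B.S) (harc : ∀ i, i + 1 < q → (w (i + 1), w i) ∈ D.arcs)
    (X : Finset ℕ) (hX : ∀ j ∈ X, j < q) (pv : ℕ → V)
    (hpa : ∀ j ∈ X, (pv j, w j) ∈ D.arcs)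
    (hpv : ∀ j ∈ X, pv j ∈ B.S ∨ ∃ i ∈ X, i + 2 ≤ j ∧ pv j = w i) :
    X.card ≤ 4 * ell D + 1 := by
  classical
  have h0 := extend_count hD B q w hinj hB harc X ∅ hX pv hpa hpv (by simp) (by simp)
  rw [Finset.union_empty, Finset.sdiff_empty] at h0
  let I := X.filter (fun i => ∃ j ∈ X, pv j = w i)
  have h0 : X.card ≤ ell D + I.card := h0
  let K := (Finset.range q).filter (fun c => c + 1 ∈ I)
  have hIK : I.card ≤ K.card + 1 := by
    have : I ⊆ insert 0 (K.image (fun c => c + 1)) := by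
      intro i hi
      rw [Finset.mem_insert, Finset.mem_image]
      rcases i with _ | i
      · exact Or.inl rfl
      · refine Or.inr ⟨i, Finset.mem_filter.2 ⟨Finset.mem_range.2 ?_, hi⟩, rfl⟩
        have := hX _ (Finset.mem_filter.1 hi).1
        omega
    have h1 := Finset.card_le_card this
    have h2 := Finset.card_insert_le 0 (K.image (fun c => c + 1))
    have h3 : (K.image (fun c => c + 1)).card ≤ K.card := Finset.card_image_le
    omega
  have hch : ∀ c, ∃ j, c ∈ K → j ∈ X ∧ pv j = w (c + 1) := by
    intro c
    by_cases hc : c ∈ K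
    · obtain ⟨j, hj, h⟩ := (Finset.mem_filter.1 (Finset.mem_filter.1 hc).2).2
      exact ⟨j, fun _ => ⟨hj, h⟩⟩
    · exact ⟨0, fun h => absurd h hc⟩
  choose ch hch using hch
  have hlt : ∀ c ∈ K, c < ch c := by
    intro c hc
    obtain ⟨h1, h2⟩ := hch c hc
    have hcX := (Finset.mem_filter.1 (Finset.mem_filter.1 hc).2).1
    rcases hpv _ h1 with h | ⟨i, hi, hij, h⟩
    · rw [h2] at h
      exact absurd h (hB _ (hX _ hcX))
    · have := hinj _ (hX _ hi) _ (hX _ hcX) (h.symm.trans h2)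
      omega
  obtain ⟨col, hcol⟩ := exists_three_col (fun c => c + 1) ch q q
  have hcolor : ∀ a : Fin 3, (K.filter (fun c => col c = a)).card ≤ ell D := by
    intro a
    have hmem : ∀ c ∈ K.filter (fun c => col c = a), c ∈ K ∧ col c = a ∧
        col c ≠ col (c + 1) ∧ col c ≠ col (ch c) := by
      intro c hc
      obtain ⟨h1, h2⟩ := Finset.mem_filter.1 hc
      have h3 := Finset.mem_range.1 (Finset.mem_filter.1 h1).1
      exact ⟨h1, h2, hcol c h3 (by omega) (Nat.lt_succ_self c) (hlt c h1)⟩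
    have h1 := extend_count hD B q w hinj hB harc X (K.filter (fun c => col c = a)) hX pv hpa hpv
      (by
        intro c hc hc1
        obtain ⟨_, h2, h3, _⟩ := hmem c hc
        obtain ⟨_, h4, _⟩ := hmem _ hc1
        exact h3 (h2.trans h4.symm))
      (by
        intro c hc
        obtain ⟨h1, h2, h3, h5⟩ := hmem c hc
        refine ⟨(Finset.mem_filter.1 (Finset.mem_filter.1 h1).2).1, ch c, ?_, (hch c h1).2⟩
        rw [Finset.mem_sdiff]
        refine ⟨(hch c h1).1, ?_⟩
        intro h6
        obtain ⟨_, h4, _⟩ := hmem _ h6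
        exact h5 (h2.trans h4.symm))
    generalize K.filter (fun c => col c = a) = C at h1 ⊢
    have h2 : (X.filter (fun i => ∃ j ∈ X \ C, pv j = w i)).card ≤ (X \ C).card := by
      have hs : (X.filter (fun i => ∃ j ∈ X \ C, pv j = w i)).image w ⊆ (X \ C).image pv := by
        intro x hx
        obtain ⟨i, hi, rfl⟩ := Finset.mem_image.1 hx
        obtain ⟨-, j, hj, h⟩ := Finset.mem_filter.1 hi
        exact Finset.mem_image.2 ⟨j, hj, h⟩
      have h3 := (Finset.card_le_card hs).trans Finset.card_image_le
      rwa [Finset.card_image_of_injOn] at h3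
      intro i hi j hj hij
      exact hinj _ (hX _ (Finset.mem_filter.1 hi).1) _ (hX _ (Finset.mem_filter.1 hj).1) hij
    have h3 : (X ∪ C).card = (X \ C).card + C.card := by
      rw [← Finset.sdiff_union_self_eq_union]
      exact Finset.card_union_of_disjoint Finset.sdiff_disjoint
    omega
  have hsum := Finset.card_eq_sum_card_fiberwise (f := col) (s := K) (t := Finset.univ)
    (fun _ _ => Finset.mem_coe.2 (Finset.mem_univ _))
  rw [Fin.sum_univ_three] at hsum
  have := hcolor 0
  have := hcolor 1
  have := hcolor 2
  omega

namespace PTree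

open Classical in
/-- The subtree rooted at `e`. -/
noncomputable def below {V : Type} {D : DirGraph V} (T : PTree D) (e : V) (he : e ∈ T.S) :
    PTree D where
  S := T.S.filter (fun v => T.Anc e v)
  r := e
  π := T.π
  h := T.h
  r_mem := Finset.mem_filter.2 ⟨he, Relation.ReflTransGen.refl⟩
  sub := fun v hv => T.sub v (Finset.mem_filter.1 hv).1
  par_mem := by
    intro v hv hve
    obtain ⟨h1, h2⟩ := Finset.mem_filter.1 hv
    obtain ⟨h3, h4⟩ := T.anc_parent hve h2
    exact Finset.mem_filter.2 ⟨T.par_mem v h1 h4, h3⟩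
  arc := by
    intro v hv hve
    obtain ⟨h1, h2⟩ := Finset.mem_filter.1 hv
    exact T.arc v h1 (T.anc_parent hve h2).2
  rank := by
    intro v hv hve
    obtain ⟨h1, h2⟩ := Finset.mem_filter.1 hv
    exact T.rank v h1 (T.anc_parent hve h2).2

open Classical in
/-- The tree with the subtree at `t` removed. -/
noncomputable def above {V : Type} {D : DirGraph V} (T : PTree D) (t : V) (ht : ¬ T.Anc t T.r) :
    PTree D where
  S := T.S.filter (fun v => ¬ T.Anc t v)
  r := T.r
  π := T.π
  h := T.h
  r_mem := Finset.mem_filter.2 ⟨T.r_mem, ht⟩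
  sub := fun v hv => T.sub v (Finset.mem_filter.1 hv).1
  par_mem := by
    intro v hv hve
    obtain ⟨h1, h2⟩ := Finset.mem_filter.1 hv
    exact Finset.mem_filter.2 ⟨T.par_mem v h1 hve, fun h => h2 (h.tail ⟨h1, hve, rfl⟩)⟩
  arc := fun v hv hve => T.arc v (Finset.mem_filter.1 hv).1 hve
  rank := fun v hv hve => T.rank v (Finset.mem_filter.1 hv).1 hve

/-- Indices whose chain of sources ends elsewhere. -/
inductive Else {V : Type} (E : V → Prop) (q : ℕ) (w pv : ℕ → V) : ℕ → Prop
  | base (j : ℕ) (h : E (pv j)) : Else E q w pv j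
  | step (i j : ℕ) (hi : i < q) (hij : i + 2 ≤ j) (h : pv j = w i) (hE : Else E q w pv i) :
      Else E q w pv j

/-- A non-branching path above `e` is short. -/
theorem path_bound {V : Type} [Fintype V] {D : DirGraph V} (hD : D.WellFormed) (T : PTree D)
    (hS : ∀ v ∈ D.verts, v ∈ T.S)
    (hopt : ∀ T' : PTree D, T'.S = T.S → T'.lvs.card ≤ T.lvs.card)
    (hsrc : ∀ v b p, (v, b) ∈ D.arcs → ∃ u, (u, v) ∈ D.arcs ∧ u ≠ b ∧ u ≠ p)
    (e : V) (he : e ∈ T.S) (q : ℕ)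
    (hq : ∀ i < q, T.π^[i] e ≠ T.r ∧ T.Single (T.π^[i + 1] e)) : q ≤ 8 * ell D + 2 := by
  classical
  rcases Nat.eq_zero_or_pos q with rfl | hq0
  · omega
  have hsucc : ∀ i, T.π^[i + 1] e = T.π (T.π^[i] e) := fun i => Function.iterate_succ_apply' _ _ _
  have hmem : ∀ i ≤ q, T.π^[i] e ∈ T.S := by
    intro i
    induction i with
    | zero => intro _; exact he
    | succ i ih =>
      intro hi
      rw [hsucc]
      exact T.par_mem _ (ih (by omega)) (hq i (by omega)).1
  have hstep : ∀ i < q, T.Step (T.π^[i + 1] e) (T.π^[i] e) := fun i hi =>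
    ⟨hmem i (by omega), (hq i hi).1, (hsucc i).symm⟩
  have hanc : ∀ j, ∀ i ≤ j, j ≤ q → T.Anc (T.π^[j] e) (T.π^[i] e) := by
    intro j
    induction j with
    | zero =>
      intro i hi _
      obtain rfl : i = 0 := by omega
      exact Relation.ReflTransGen.refl
    | succ j ih =>
      intro i hi hj
      rcases Nat.lt_or_ge j i with h | h
      · obtain rfl : i = j + 1 := by omega
        exact Relation.ReflTransGen.refl
      · exact Relation.ReflTransGen.head (hstep j (by omega)) (ih i h (by omega))
  have hlt : ∀ i j, i < j → j ≤ q → T.h (T.π^[j] e) < T.h (T.π^[i] e) := by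
    intro i j hij hj
    have h1 := T.anc_h (hanc j (i + 1) hij hj)
    have h2 := T.rank _ (hmem i (by omega)) (hq i (by omega)).1
    rw [← hsucc] at h2
    omega
  let w : ℕ → V := fun i => T.π^[i + 1] e
  have hw : ∀ i, w i = T.π^[i + 1] e := fun _ => rfl
  have hinj : ∀ i < q, ∀ j < q, w i = w j → i = j := by
    intro i hi j hj hij
    rw [hw, hw] at hij
    rcases Nat.lt_trichotomy i j with h | h | h
    · have := hlt (i + 1) (j + 1) (by omega) (by omega)
      rw [hij] at this
      omega
    · exact h
    · have := hlt (j + 1) (i + 1) (by omega) (by omega)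
      rw [hij] at this
      omega
  have harc0 : ∀ i < q, (w i, T.π^[i] e) ∈ D.arcs := by
    intro i hi
    rw [hw, hsucc]
    exact T.arc _ (hmem i (by omega)) (hq i hi).1
  have harc : ∀ i, i + 1 < q → (w (i + 1), w i) ∈ D.arcs := fun i hi => harc0 (i + 1) hi
  -- descendants of the top
  have hdesc : ∀ u, T.Anc (T.π^[q] e) u → T.Anc e u ∨ ∃ i < q, u = w i := by
    intro u hu
    induction hu with
    | refl =>
      right
      refine ⟨q - 1, by omega, ?_⟩
      rw [hw, Nat.sub_add_cancel hq0]
    | tail hab hb ih =>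
      rename_i a b
      rcases ih with h | ⟨i, hi, rfl⟩
      · exact Or.inl (h.tail hb)
      · have := (hq i hi).2 _ _ hb (hstep i hi)
        rcases i with _ | i
        · left
          rw [this]
          exact Relation.ReflTransGen.refl
        · right
          exact ⟨i, by omega, this⟩
  have hpv : ∀ j, ∃ u, j < q → (u, w j) ∈ D.arcs ∧
      (¬ T.Anc (T.π^[q] e) u ∨ T.Anc e u ∨ ∃ i < q, i + 2 ≤ j ∧ u = w i) := by
    intro j
    by_cases hj : j < q
    · obtain ⟨u, hu1, hu2, hu3⟩ := hsrc _ _ (T.π (w j)) (harc0 j hj)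
      refine ⟨u, fun _ => ⟨hu1, ?_⟩⟩
      by_cases h1 : T.Anc (T.π^[q] e) u
      · right
        rcases hdesc u h1 with h | ⟨i, hi, rfl⟩
        · exact Or.inl h
        · right
          refine ⟨i, hi, ?_, rfl⟩
          by_contra hlt2
          rcases Nat.lt_trichotomy i j with h | h | h
          · obtain rfl : j = i + 1 := by omega
            exact hu2 rfl
          · subst h
            exact (hD _ hu1).2.2 rfl
          · have hjr := (hq (j + 1) (by omega)).1
            have hleaf := T.leaf_of_opt hopt (hmem (i + 1) (by omega)) (hmem (j + 1) (by omega))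
              hjr hu1 (by
                intro ha
                have h2 := T.anc_h ha
                have h3 := hlt (j + 1) (i + 1) (by omega) (by omega)
                omega) hu3 (by
                rw [← hsucc]
                exact (hq (j + 1) (by omega)).2)
            have h4 := (T.mem_lvs_iff.1 hleaf).2
            obtain ⟨h5, h6, h7⟩ := hstep i hi
            exact h4 _ h5 h6 h7
      · exact Or.inl h1
    · exact ⟨e, fun h => absurd h hj⟩
  choose pv hpv using hpv
  let EX : ℕ → Prop := Else (fun u => ¬ T.Anc (T.π^[q] e) u) q w pv
  let X := (Finset.range q).filter EX
  let Y := (Finset.range q).filter (fun j => ¬ EX j)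
  have hXY : X.card + Y.card = q := by
    have := Finset.card_filter_add_card_filter_not (s := Finset.range q) EX
    rw [Finset.card_range] at this
    exact this
  have hY : Y.card ≤ 4 * ell D + 1 := by
    refine extend_bound hD (T.below e he) q w hinj ?_ harc Y
      (fun j hj => Finset.mem_range.1 (Finset.mem_filter.1 hj).1) pv
      (fun j hj => (hpv j (Finset.mem_range.1 (Finset.mem_filter.1 hj).1)).1) ?_
    · intro i hi h
      have h1 := T.anc_h (Finset.mem_filter.1 h).2
      have h2 := hlt 0 (i + 1) (by omega) (by omega)
      rw [← hw] at h2
      simp only [Function.iterate_zero, id] at h2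
      omega
    · intro j hj
      obtain ⟨hj1, hj2⟩ := Finset.mem_filter.1 hj
      obtain ⟨h1, h2⟩ := hpv j (Finset.mem_range.1 hj1)
      rcases h2 with h2 | h2 | ⟨i, hi, hij, h2⟩
      · exact absurd (Else.base j h2) hj2
      · exact Or.inl (Finset.mem_filter.2 ⟨T.anc_mem he h2, h2⟩)
      · refine Or.inr ⟨i, Finset.mem_filter.2 ⟨Finset.mem_range.2 hi, ?_⟩, hij, h2⟩
        intro h3
        exact hj2 (Else.step i j hi hij h2 h3)
  have hXb : X.card ≤ 4 * ell D + 1 := by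
    by_cases htop : T.Anc (T.π^[q] e) T.r
    · have hno : ∀ j, EX j → j < q → False := by
        intro j hj
        induction hj with
        | base j h =>
          intro hjq
          apply h
          refine Relation.ReflTransGen.trans htop (T.anc_root _ _ ?_ le_rfl)
          exact hS _ (hD _ (hpv j hjq).1).1
        | step i j hi hij h hE ih => intro _; exact ih hi
      have : X = ∅ := by
        apply Finset.filter_eq_empty_iff.2
        intro j hj h
        exact hno j h (Finset.mem_range.1 hj)
      rw [this, Finset.card_empty]
      omega
    · refine extend_bound hD (T.above _ htop) q w hinj ?_ harc X
        (fun j hj => Finset.mem_range.1 (Finset.mem_filter.1 hj).1) pv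
        (fun j hj => (hpv j (Finset.mem_range.1 (Finset.mem_filter.1 hj).1)).1) ?_
      · intro i hi h
        exact (Finset.mem_filter.1 h).2 (hanc q (i + 1) (by omega) le_rfl)
      · intro j hj
        obtain ⟨hj1, hj2⟩ := Finset.mem_filter.1 hj
        cases hj2 with
        | base _ h =>
          left
          exact Finset.mem_filter.2
            ⟨hS _ (hD _ (hpv j (Finset.mem_range.1 hj1)).1).1, h⟩
        | step i _ hi hij h hE =>
          exact Or.inr ⟨i, Finset.mem_filter.2 ⟨Finset.mem_range.2 hi, hE⟩, hij, h⟩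
  omega

open Classical in
/-- The children of `x`. -/
noncomputable def kids {V : Type} {D : DirGraph V} (T : PTree D) (x : V) : Finset V :=
  (T.S.erase T.r).filter (fun b => T.π b = x)

theorem mem_kids {V : Type} {D : DirGraph V} (T : PTree D) {x b : V} :
    b ∈ T.kids x ↔ T.Step x b := by
  classical
  unfold kids Step
  rw [Finset.mem_filter, Finset.mem_erase]
  tauto

theorem mem_lvs {V : Type} {D : DirGraph V} (T : PTree D) {x : V} :
    x ∈ T.lvs ↔ x ∈ T.S ∧ (T.kids x).card = 0 := by
  classical
  unfold lvs
  rw [Finset.card_eq_zero, Finset.eq_empty_iff_forall_notMem]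
  simp only [Finset.mem_filter, mem_kids, Step, not_and, ne_eq]

open Classical in
/-- The number of path ends (leaves and branch vertices). -/
theorem ends_card {V : Type} {D : DirGraph V} (T : PTree D) :
    (T.S.filter (fun x => (T.kids x).card ≠ 1)).card + 1 ≤ 2 * T.lvs.card := by
  have h1 := Finset.card_eq_sum_card_fiberwise (f := T.π) (s := T.S.erase T.r) (t := T.S)
    (fun b hb => by
      have hb := Finset.mem_erase.1 (Finset.mem_coe.1 hb)
      exact T.par_mem b hb.2 hb.1)
  rw [Finset.card_erase_of_mem T.r_mem] at h1
  have hpos : 0 < T.S.card := Finset.card_pos.2 ⟨_, T.r_mem⟩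
  have hl : T.lvs.card = ∑ x ∈ T.S, if (T.kids x).card = 0 then 1 else 0 := by
    rw [← Finset.card_filter]
    congr 1
    ext x
    rw [mem_lvs, Finset.mem_filter]
  have he : (T.S.filter (fun x => (T.kids x).card ≠ 1)).card =
      ∑ x ∈ T.S, if (T.kids x).card ≠ 1 then 1 else 0 := Finset.card_filter _ _
  have hs : T.S.card = ∑ x ∈ T.S, 1 := by simp
  have h1' : T.S.card - 1 = ∑ x ∈ T.S, (T.kids x).card := h1
  have key : ∑ x ∈ T.S, ((if (T.kids x).card ≠ 1 then 1 else 0) + 1) ≤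
      ∑ x ∈ T.S, (2 * (if (T.kids x).card = 0 then 1 else 0) + (T.kids x).card) := by
    apply Finset.sum_le_sum
    intro x _
    split_ifs <;> omega
  rw [Finset.sum_add_distrib, Finset.sum_add_distrib, ← Finset.mul_sum, ← hl, ← he, ← hs,
    ← h1'] at key
  omega

theorem cover {V : Type} [Fintype V] {D : DirGraph V} (T : PTree D) (H : ℕ) (hH : ∀ v, T.h v ≤ H)
    (m : ℕ) : ∀ v ∈ T.S, H ≤ T.h v + m → ∃ e ∈ T.S, (T.kids e).card ≠ 1 ∧ ∃ q,
      (∀ i < q, T.π^[i] e ≠ T.r ∧ T.Single (T.π^[i + 1] e)) ∧ v = T.π^[q] e := by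
  induction m with
  | zero =>
    intro v hv hm
    refine ⟨v, hv, ?_, 0, by omega, rfl⟩
    intro h
    obtain ⟨b, hb⟩ := Finset.card_eq_one.1 h
    have hb' : b ∈ T.kids v := by rw [hb]; exact Finset.mem_singleton_self b
    obtain ⟨h1, h2, h3⟩ := T.mem_kids.1 hb'
    have := T.rank b h1 h2
    rw [h3] at this
    have := hH b
    omega
  | succ m ih =>
    intro v hv hm
    by_cases h : (T.kids v).card = 1
    · obtain ⟨b, hb⟩ := Finset.card_eq_one.1 h
      have hb' : b ∈ T.kids v := by rw [hb]; exact Finset.mem_singleton_self b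
      obtain ⟨h1, h2, h3⟩ := T.mem_kids.1 hb'
      have := T.rank b h1 h2
      rw [h3] at this
      obtain ⟨e, he, hk, q, hq, hbq⟩ := ih b h1 (by omega)
      have hv' : v = T.π^[q + 1] e := by
        rw [Function.iterate_succ_apply', ← hbq, h3]
      refine ⟨e, he, hk, q + 1, ?_, hv'⟩
      intro i hi
      rcases Nat.lt_or_ge i q with h4 | h4
      · exact hq i h4
      · obtain rfl : i = q := by omega
        rw [← hbq, ← hv']
        refine ⟨h2, ?_⟩
        intro c d hc hd
        rw [← mem_kids, hb, Finset.mem_singleton] at hc hd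
        rw [hc, hd]
    · exact ⟨v, hv, h, 0, by omega, rfl⟩

end PTree

/-- Every out-branching yields a parent-function tree. -/
theorem exists_ptree {V : Type} [Fintype V] {D T : DirGraph V} {r : V}
    (h : IsOutBranching T D r) : ∃ P : PTree D, (P.S : Set V) = D.verts := by
  classical
  obtain ⟨⟨⟨h1, h2, h3, h4, h5⟩, h6, h7⟩, h8⟩ := h
  have hnor : ∀ a, (a, r) ∉ T.arcs := by
    intro a ha
    unfold inDeg at h3
    rw [Set.ncard_eq_zero (Set.toFinite _)] at h3
    have : (a, r) ∈ {a ∈ T.arcs | a.2 = r} := ⟨ha, rfl⟩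
    rw [h3] at this
    exact this
  have hpi : ∀ v, ∃ p, v ∈ T.verts → v ≠ r → (p, v) ∈ T.arcs ∧ ∀ a, (a, v) ∈ T.arcs → a = p := by
    intro v
    by_cases hv : v ∈ T.verts ∧ v ≠ r
    · have := h4 v hv.1 hv.2
      unfold inDeg at this
      obtain ⟨⟨p, v'⟩, hp⟩ := Set.ncard_eq_one.1 this
      have hmem : (p, v') ∈ {a ∈ T.arcs | a.2 = v} := by rw [hp]; rfl
      obtain ⟨hm1, hm2⟩ := hmem
      simp only at hm2
      subst hm2
      refine ⟨p, fun _ _ => ⟨hm1, ?_⟩⟩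
      intro a ha
      have : (a, v') ∈ {a ∈ T.arcs | a.2 = v'} := ⟨ha, rfl⟩
      rw [hp, Set.mem_singleton_iff, Prod.mk.injEq] at this
      exact this.1
    · exact ⟨v, fun a b => absurd ⟨a, b⟩ hv⟩
  choose p hp using hpi
  have hreach : ∀ l : List V, ∀ u v : V, l.IsChain (fun a b => (a, b) ∈ T.arcs) →
      l.head? = some u → l.getLast? = some v → ∃ k, p^[k] v = u := by
    intro l
    induction l with
    | nil => intro u v _ h; simp at h
    | cons a l ih =>
      intro u v hc hh hl
      simp only [List.head?_cons, Option.some.injEq] at hh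
      subst hh
      rcases l with _ | ⟨b, l⟩
      · simp only [List.getLast?_singleton, Option.some.injEq] at hl
        exact ⟨0, hl.symm⟩
      · rw [List.isChain_cons_cons] at hc
        rw [List.getLast?_cons_cons] at hl
        obtain ⟨k, hk⟩ := ih b v hc.2 rfl hl
        refine ⟨k + 1, ?_⟩
        rw [Function.iterate_succ_apply', hk]
        have hb : b ≠ r := by
          rintro rfl
          exact hnor _ hc.1
        exact ((hp b (h1 _ hc.1).2 hb).2 a hc.1).symm
  have hex : ∀ v ∈ T.verts, ∃ k, p^[k] v = r := by
    intro v hv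
    obtain ⟨l, ⟨_, _, _, hc⟩, hh, hl⟩ := h5 v hv
    exact hreach l r v hc hh hl
  refine ⟨{ S := T.verts.toFinset, r := r, π := p, h := fun v => sInf {k | p^[k] v = r}
            r_mem := by simpa using h2
            sub := fun v hv => h6 (by simpa using hv)
            par_mem := ?_, arc := ?_, rank := ?_ }, ?_⟩
  · intro v hv hvr
    rw [Set.mem_toFinset] at hv ⊢
    exact (h1 _ (hp v hv hvr).1).1
  · intro v hv hvr
    rw [Set.mem_toFinset] at hv
    exact h7 (hp v hv hvr).1
  · intro v hv hvr
    rw [Set.mem_toFinset] at hv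
    have hm : sInf {k | p^[k] v = r} ∈ {k | p^[k] v = r} := Nat.sInf_mem (hex v hv)
    generalize sInf {k | p^[k] v = r} = k at hm
    rcases k with _ | k
    · exact absurd hm hvr
    · rw [Set.mem_ofPred_eq, Function.iterate_succ_apply] at hm
      have : sInf {k | p^[k] (p v) = r} ≤ k := Nat.sInf_le hm
      change sInf {k | p^[k] (p v) = r} < k + 1
      omega
  · simpa using h8

theorem exists_source {V : Type} [Fintype V] (D : DirGraph V) (hD : D.WellFormed)
    (hdeg : (∀ v ∈ D.verts, 3 ≤ D.inDeg v) ∨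
      ((∀ u v : V, (u, v) ∈ D.arcs → (v, u) ∉ D.arcs) ∧
        ∀ v ∈ D.verts, 2 ≤ D.inDeg v)) :
    ∀ v b p, (v, b) ∈ D.arcs → ∃ u, (u, v) ∈ D.arcs ∧ u ≠ b ∧ u ≠ p := by
  intro v b p hvb
  have hv : v ∈ D.verts := (hD _ hvb).1
  by_contra hcon
  push Not at hcon
  rcases hdeg with h | ⟨ho, h⟩
  · have h1 := h v hv
    have hsub : {a ∈ D.arcs | a.2 = v} ⊆ {(b, v), (p, v)} := by
      rintro ⟨x, y⟩ ⟨hx, hy⟩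
      simp only at hy
      subst hy
      by_cases hxb : x = b
      · subst hxb
        exact Or.inl rfl
      · right
        rw [hcon x hx hxb]
        rfl
    have h2 := Set.ncard_le_ncard hsub (Set.toFinite _)
    have h3 := Set.ncard_insert_le (b, v) {(p, v)}
    rw [Set.ncard_singleton] at h3
    unfold inDeg at h1
    omega
  · have h1 := h v hv
    have hsub : {a ∈ D.arcs | a.2 = v} ⊆ {(p, v)} := by
      rintro ⟨x, y⟩ ⟨hx, hy⟩
      simp only at hy
      subst hy
      have hxb : x ≠ b := by
        rintro rfl
        exact ho _ _ hvb hx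
      rw [hcon x hx hxb]
      rfl
    have h2 := Set.ncard_le_ncard hsub (Set.toFinite _)
    rw [Set.ncard_singleton] at h2
    unfold inDeg at h1
    omega

theorem card_bound {V : Type} [Fintype V] {D : DirGraph V} (hD : D.WellFormed) (T : PTree D)
    (hS : ∀ v ∈ D.verts, v ∈ T.S)
    (hopt : ∀ T' : PTree D, T'.S = T.S → T'.lvs.card ≤ T.lvs.card)
    (hsrc : ∀ v b p, (v, b) ∈ D.arcs → ∃ u, (u, v) ∈ D.arcs ∧ u ≠ b ∧ u ≠ p) :
    T.S.card ≤ 16 * ell D ^ 2 := by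
  classical
  set E := T.S.filter (fun x => (T.kids x).card ≠ 1) with hE
  have h1 : T.S ⊆ E.biUnion (fun e => (Finset.range (8 * ell D + 3)).image (fun q => T.π^[q] e)) := by
    intro v hv
    obtain ⟨H, hH⟩ : ∃ H : ℕ, ∀ v, T.h v ≤ H :=
      ⟨Finset.univ.sup T.h, fun v => Finset.le_sup (Finset.mem_univ v)⟩
    obtain ⟨e, he, hk, q, hq, hvq⟩ := T.cover H hH H v hv (by omega)
    have := T.path_bound hD hS hopt hsrc e he q hq
    rw [Finset.mem_biUnion]
    refine ⟨e, Finset.mem_filter.2 ⟨he, hk⟩, Finset.mem_image.2 ⟨q, ?_, hvq.symm⟩⟩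
    rw [Finset.mem_range]
    omega
  have h2 := (Finset.card_le_card h1).trans (Finset.card_biUnion_le_card_mul E _ (8 * ell D + 3)
    (fun e _ => Finset.card_image_le.trans (Finset.card_range _).le))
  have h3 : E.card + 1 ≤ 2 * T.lvs.card := T.ends_card
  have h4 := T.card_lvs_le
  have h5 : E.card + 1 ≤ 2 * ell D := by omega
  nlinarith

theorem ell_ge_quarter_sqrt {V : Type} [Fintype V]
    (D : DirGraph V) (n : ℕ) (hD : D.WellFormed) (hn : D.verts.ncard = n)
    (hbr : ∃ (T : DirGraph V) (r : V), IsOutBranching T D r)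
    (hdeg : (∀ v ∈ D.verts, 3 ≤ D.inDeg v) ∨
      ((∀ u v : V, (u, v) ∈ D.arcs → (v, u) ∉ D.arcs) ∧
        ∀ v ∈ D.verts, 2 ≤ D.inDeg v)) :
    (1 / 4 : ℝ) * Real.sqrt n ≤ (ell D : ℝ) := by
  classical
  obtain ⟨T0, r0, h0⟩ := hbr
  obtain ⟨P0, hP0⟩ := exists_ptree h0
  let A : Set ℕ := {k | ∃ P : PTree D, (P.S : Set V) = D.verts ∧ P.lvs.card = k}
  have hA : sSup A ∈ A := by
    apply Nat.sSup_mem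
    · exact ⟨_, P0, hP0, rfl⟩
    · refine ⟨ell D, ?_⟩
      rintro k ⟨P, -, rfl⟩
      exact P.card_lvs_le
  obtain ⟨T, hT, hTk⟩ := hA
  have hbound := card_bound hD T
    (fun v hv => by
      rw [← hT] at hv
      exact hv)
    (fun T' hT' => by
      rw [hTk]
      apply le_csSup
      · refine ⟨ell D, ?_⟩
        rintro k ⟨P, -, rfl⟩
        exact P.card_lvs_le
      · exact ⟨T', by rw [hT', hT], rfl⟩)
    (exists_source D hD hdeg)
  have hn' : n ≤ 16 * ell D ^ 2 := by
    rw [← hn, ← hT, Set.ncard_coe_finset]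
    exact hbound
  have h1 : (n : ℝ) ≤ (4 * (ell D : ℝ)) ^ 2 := by
    have : (n : ℝ) ≤ ((16 * ell D ^ 2 : ℕ) : ℝ) := by exact_mod_cast hn'
    push_cast at this
    nlinarith
  have h2 : Real.sqrt n ≤ 4 * (ell D : ℝ) := Real.sqrt_le_iff.2 ⟨by positivity, h1⟩
  linarith

end DirGraph
end

section
/- Let D be a strongly connected digraph on n vertices such that every vertex of D has in-degree at least 3, or such that D is an oriented graph in which every vertex has in-degree at least 2. Then ℓ_s(D) ≥ (1/4)·√n. -/
namespace LeafAux

/-- two-colouring used for the switching sets -/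
lemma exists_col (φ : ℕ → ℕ) (hφ : ∀ j, 1 ≤ j → φ j < j) :
    ∃ c : ℕ → Bool, ∀ j, 1 ≤ φ j → 1 ≤ j → c j = !(c (φ j - 1)) := by
  classical
  let F : (j : ℕ) → ((i : ℕ) → i < j → Bool) → Bool := fun j ih =>
    if h : φ j - 1 < j then !(ih (φ j - 1) h) else true
  let c : ℕ → Bool := fun j => @Nat.strongRec (fun _ => Bool) F j
  refine ⟨c, fun j h1 h2 => ?_⟩
  have hlt : φ j - 1 < j := by have := hφ j h2; omega
  change @Nat.strongRec (fun _ => Bool) F j = _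
  rw [Nat.strongRec_eq]
  simp only [F, hlt, dite_true]
  rfl

lemma seg_bound (m k : ℕ) (φ : ℕ → ℕ) (hφ : ∀ j, 1 ≤ j → φ j < j)
    (H : ∀ S : Finset ℕ, (∀ j ∈ S, 1 ≤ j ∧ j < m ∧ j + 1 ∉ S) →
      ((Finset.Icc 1 m).filter (fun x => (∀ j ∈ Finset.Icc 1 m, j ∉ S → φ j ≠ x) ∧
        x - 1 ∉ S)).card ≤ k) : m ≤ 4 * k + 1 := by
  classical
  obtain ⟨c, hc⟩ := exists_col φ hφ
  let q : ℕ → Bool × Bool := fun j => (decide (j % 2 = 0), c j)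
  let S : Bool × Bool → Finset ℕ := fun t => (Finset.Ico 1 m).filter (fun j => q j = t)
  let P : ℕ → Bool × Bool → Prop := fun x t =>
    (∀ j ∈ Finset.Icc 1 m, j ∉ S t → φ j ≠ x) ∧ x - 1 ∉ S t
  have hS : ∀ t, ((Finset.Icc 1 m).filter (fun x => P x t)).card ≤ k := by
    intro t
    apply H (S t)
    intro j hj
    simp only [S, Finset.mem_filter, Finset.mem_Ico] at hj ⊢
    refine ⟨hj.1.1, hj.1.2, ?_⟩
    rintro ⟨_, h⟩
    have : q (j+1) = q j := by rw [h, hj.2]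
    have h2 := congrArg Prod.fst this
    simp only [q, decide_eq_decide] at h2
    omega
  have key : ∀ x ∈ Finset.Icc 1 m, 2 ≤ (Finset.univ.filter (fun t => P x t)).card +
      ((Finset.Icc 1 m).filter (fun j => φ j = x)).card + (if φ m = x then 1 else 0) := by
    intro x hx
    rw [Finset.mem_Icc] at hx
    rcases Nat.lt_or_ge 1 ((Finset.Icc 1 m).filter (fun j => φ j = x)).card with h | h
    · omega
    rcases Nat.eq_zero_or_pos ((Finset.Icc 1 m).filter (fun j => φ j = x)).card with h0 | h0
    · have hsub : (Finset.univ.erase (q (x-1))) ⊆ (Finset.univ.filter (fun t => P x t)) := by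
        intro t ht
        simp only [Finset.mem_erase, Finset.mem_univ, and_true] at ht
        simp only [Finset.mem_filter, Finset.mem_univ, true_and, P]
        refine ⟨fun j hj _ hh => ?_, fun hh => ?_⟩
        · have : j ∈ (Finset.Icc 1 m).filter (fun j => φ j = x) :=
            Finset.mem_filter.2 ⟨hj, hh⟩
          rw [Finset.card_eq_zero] at h0
          rw [h0] at this
          simp at this
        · exact ht (Finset.mem_filter.1 hh).2.symm
      have := Finset.card_le_card hsub
      rw [Finset.card_erase_of_mem (Finset.mem_univ _)] at this
      simp at this
      omega
    · have h1 : ((Finset.Icc 1 m).filter (fun j => φ j = x)).card = 1 := by omega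
      obtain ⟨j, hj⟩ := Finset.card_eq_one.1 h1
      have hjm : j ∈ (Finset.Icc 1 m).filter (fun j => φ j = x) := by rw [hj]; simp
      simp only [Finset.mem_filter, Finset.mem_Icc] at hjm
      by_cases hm : φ m = x
      · rw [if_pos hm]; omega
      · have hjlt : j < m := by
          rcases Nat.lt_or_ge j m with h | h
          · exact h
          · have : j = m := by omega
            subst this; exact absurd hjm.2 hm
        have hmem : q j ∈ (Finset.univ.filter (fun t => P x t)) := by
          simp only [Finset.mem_filter, Finset.mem_univ, true_and, P]
          refine ⟨fun i hi hiS hh => ?_, fun hh => ?_⟩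
          · have : i ∈ (Finset.Icc 1 m).filter (fun j => φ j = x) :=
              Finset.mem_filter.2 ⟨hi, hh⟩
            rw [hj, Finset.mem_singleton] at this
            subst this
            apply hiS
            simp only [S, Finset.mem_filter, Finset.mem_Ico, and_true]
            omega
          · have h3 := congrArg Prod.snd (Finset.mem_filter.1 hh).2
            simp only [q] at h3
            have := hc j (by omega) (by omega)
            rw [hjm.2, h3] at this
            cases h5 : c j <;> simp [h5] at this
        have := Finset.card_pos.2 ⟨_, hmem⟩
        omega
  have hsum := Finset.sum_le_sum key
  simp only [Finset.sum_add_distrib, Finset.sum_const, Nat.card_Icc, smul_eq_mul] at hsum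
  have e1 : ∑ x ∈ Finset.Icc 1 m, (Finset.univ.filter (fun t => P x t)).card
      = ∑ t, ((Finset.Icc 1 m).filter (fun x => P x t)).card := by
    simp only [Finset.card_filter]
    exact Finset.sum_comm
  have e2 : ∑ t, ((Finset.Icc 1 m).filter (fun x => P x t)).card ≤ 4 * k := by
    refine (Finset.sum_le_sum (fun t _ => hS t)).trans ?_
    simp
  have e3 : ∑ x ∈ Finset.Icc 1 m, ((Finset.Icc 1 m).filter (fun j => φ j = x)).card ≤ m := by
    simp only [Finset.card_filter]
    rw [Finset.sum_comm]
    calc _ ≤ ∑ j ∈ Finset.Icc 1 m, 1 := by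
          apply Finset.sum_le_sum
          intro j _
          rw [Finset.sum_ite_eq]
          split_ifs <;> simp
      _ = m := by simp
  have e4 : ∑ x ∈ Finset.Icc 1 m, (if φ m = x then 1 else 0) ≤ 1 := by
    rw [Finset.sum_ite_eq]; split_ifs <;> simp
  omega

set_option linter.unusedSectionVars false

variable {α : Type} [Fintype α] [DecidableEq α]

/-- out-tree on `W` given by a parent function -/
def IsT (E : α → α → Prop) (W : Finset α) (r : α) (p : α → α) : Prop :=
  r ∈ W ∧ (∀ v ∈ W, v ≠ r → p v ∈ W ∧ E (p v) v) ∧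
    ∃ d : α → ℕ, ∀ v ∈ W, v ≠ r → d (p v) < d v

/-- leaves -/
def lv (W : Finset α) (r : α) (p : α → α) : Finset α :=
  W.filter (fun v => ∀ c ∈ W, c ≠ r → p c ≠ v)

lemma exists_exit (E : α → α → Prop) (W : Finset α) {a b : α}
    (h : Relation.ReflTransGen E a b) (ha : a ∈ W) (hb : b ∉ W) :
    ∃ x y, E x y ∧ x ∈ W ∧ y ∉ W := by
  induction h with
  | refl => exact absurd ha hb
  | tail h1 h2 ih =>
    rename_i b c
    by_cases hbW : b ∈ W
    · exact ⟨b, c, h2, hbW, hb⟩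
    · exact ih hbW

lemma extend (E : α → α → Prop) (hs : ∀ u v, Relation.ReflTransGen E u v)
    (n : ℕ) : ∀ (W : Finset α) (r : α) (p : α → α), IsT E W r p →
      (Finset.univ \ W).card = n →
      ∃ p', IsT E Finset.univ r p' ∧ (lv W r p).card ≤ (lv Finset.univ r p').card := by
  induction n with
  | zero =>
    intro W r p h hn
    have : W = Finset.univ := by
      rw [Finset.card_eq_zero, Finset.sdiff_eq_empty_iff_subset] at hn
      exact Finset.univ_subset_iff.1 hn
    subst this
    exact ⟨p, h, le_rfl⟩
  | succ n ih =>
    intro W r p h hn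
    obtain ⟨z, hz⟩ := Finset.card_pos.1 (by omega : 0 < (Finset.univ \ W).card)
    simp only [Finset.mem_sdiff, Finset.mem_univ, true_and] at hz
    obtain ⟨x, y, hxy, hx, hy⟩ := exists_exit E W (hs r z) h.1 hz
    obtain ⟨hr, hp, d, hd⟩ := h
    have hyr : y ≠ r := fun e => hy (e ▸ hr)
    have hxy' : x ≠ y := fun e => hy (e ▸ hx)
    have hT : IsT E (insert y W) r (Function.update p y x) := by
      refine ⟨Finset.mem_insert_of_mem hr, ?_, Function.update d y (d x + 1), ?_⟩
      · intro v hv hvr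
        by_cases hvy : v = y
        · subst hvy
          simp only [Function.update_self]
          exact ⟨Finset.mem_insert_of_mem hx, hxy⟩
        · rw [Function.update_of_ne hvy]
          have := hp v (Finset.mem_of_mem_insert_of_ne hv hvy) hvr
          exact ⟨Finset.mem_insert_of_mem this.1, this.2⟩
      · intro v hv hvr
        by_cases hvy : v = y
        · subst hvy
          simp only [Function.update_self]
          rw [Function.update_of_ne hxy']; omega
        · rw [Function.update_of_ne hvy, Function.update_of_ne hvy]
          have hvW := Finset.mem_of_mem_insert_of_ne hv hvy
          have h1 := (hp v hvW hvr).1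
          rw [Function.update_of_ne (fun e : p v = y => hy (e ▸ h1))]
          exact hd v hvW hvr
    obtain ⟨p', hp', hle⟩ := ih _ _ _ hT (by
      rw [Finset.sdiff_insert, Finset.card_erase_of_mem (by simpa using hy)]; omega)
    refine ⟨p', hp', le_trans ?_ hle⟩
    have hsub : insert y ((lv W r p).erase x) ⊆ lv (insert y W) r (Function.update p y x) := by
      intro v hv
      rw [Finset.mem_insert] at hv
      unfold lv
      rw [Finset.mem_filter]
      rcases hv with rfl | hv
      · refine ⟨Finset.mem_insert_self _ _, fun c hc hcr => ?_⟩
        by_cases hcv : c = v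
        · subst hcv; simpa using hxy'
        · rw [Function.update_of_ne hcv]
          intro e
          exact hy (e ▸ (hp c (Finset.mem_of_mem_insert_of_ne hc hcv) hcr).1)
      · rw [Finset.mem_erase, lv, Finset.mem_filter] at hv
        refine ⟨Finset.mem_insert_of_mem hv.2.1, fun c hc hcr => ?_⟩
        by_cases hcv : c = y
        · subst hcv; simpa using hv.1.symm
        · rw [Function.update_of_ne hcv]
          exact hv.2.2 c (Finset.mem_of_mem_insert_of_ne hc hcv) hcr
    have h1 := Finset.card_le_card hsub
    rw [Finset.card_insert_of_notMem] at h1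
    · have := Finset.pred_card_le_card_erase (s := lv W r p) (a := x)
      omega
    · intro hh
      have := (Finset.mem_erase.1 hh).2
      exact hy (Finset.mem_filter.1 this).1

/-- existence of a maximum tree -/
lemma exists_max (E : α → α → Prop) (hs : ∀ u v, Relation.ReflTransGen E u v) [Nonempty α] :
    ∃ r p, IsT E Finset.univ r p ∧
      ∀ W r' p', IsT E W r' p' → (lv W r' p').card ≤ (lv Finset.univ r p).card := by
  classical
  let A : Set ℕ := {k | ∃ (W : Finset α) (r : α) (p : α → α), IsT E W r p ∧ (lv W r p).card = k}
  have hne : A.Nonempty := by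
    obtain ⟨r⟩ := ‹Nonempty α›
    refine ⟨_, {r}, r, id, ⟨by simp, ?_, fun _ => 0, ?_⟩, rfl⟩
    · intro v hv h; simp at hv; exact absurd hv h
    · intro v hv h; simp at hv; exact absurd hv h
  have hb : BddAbove A := by
    refine ⟨Fintype.card α, ?_⟩
    rintro k ⟨W, r, p, _, rfl⟩
    exact Finset.card_le_univ _
  obtain ⟨W, r, p, hT, hk⟩ := Nat.sSup_mem hne hb
  obtain ⟨p', hp', hle⟩ := extend E hs _ W r p hT rfl
  refine ⟨r, p', hp', fun W' r' q hq => ?_⟩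
  have : (lv W' r' q).card ≤ sSup A := le_csSup hb ⟨W', r', q, hq, rfl⟩
  omega

lemma normalize (E : α → α → Prop) (W : Finset α) (r : α) (p : α → α) (h : IsT E W r p) :
    IsT E W r (Function.update p r r) ∧ lv W r (Function.update p r r) = lv W r p := by
  obtain ⟨hr, hp, d, hd⟩ := h
  refine ⟨⟨hr, ?_, d, ?_⟩, ?_⟩
  · intro v hv hvr; rw [Function.update_of_ne hvr]; exact hp v hv hvr
  · intro v hv hvr; rw [Function.update_of_ne hvr]; exact hd v hv hvr
  · unfold lv
    apply Finset.filter_congr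
    intro v _
    refine forall_congr' fun c => forall_congr' fun _ => forall_congr' fun hc => ?_
    rw [Function.update_of_ne hc]

lemma seg (E : α → α → Prop) (k : ℕ)
    (hmax : ∀ W r p, IsT E W r p → (lv W r p).card ≤ k)
    (r : α) (p : α → α) (d : α → ℕ) (hpr : p r = r) (hE : ∀ v, v ≠ r → E (p v) v)
    (hd : ∀ v, v ≠ r → d (p v) < d v) (w : α) (m : ℕ) (hnr : ∀ i < m, p^[i] w ≠ r)
    (f : ℕ → α)
    (hf : ∀ j, 1 ≤ j → j ≤ m → E (f j) (p^[j] w) ∧ ((∃ t, p^[t] (f j) = w) ∨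
      ∃ i, 1 ≤ i ∧ i + 2 ≤ j ∧ f j = p^[i] w)) : m ≤ 4 * k + 1 := by
  classical
  have hφ : ∀ j, ∃ i, (1 ≤ j → i < j) ∧ (1 ≤ j → j ≤ m →
      ((i = 0 ∧ ∃ t, p^[t] (f j) = w) ∨ (1 ≤ i ∧ i + 2 ≤ j ∧ f j = p^[i] w))) := by
    intro j
    by_cases hj : 1 ≤ j ∧ j ≤ m
    · rcases (hf j hj.1 hj.2).2 with h | ⟨i, h1, h2, h3⟩
      · exact ⟨0, fun h => h, fun _ _ => Or.inl ⟨rfl, h⟩⟩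
      · exact ⟨i, fun _ => by omega, fun _ _ => Or.inr ⟨h1, h2, h3⟩⟩
    · exact ⟨0, fun h => h, fun h1 h2 => absurd ⟨h1, h2⟩ hj⟩
  choose φ hφ1 hφ2 using hφ
  apply seg_bound m k φ hφ1
  intro S hS
  set a : ℕ → α := fun j => p^[j] w with ha
  have hstep : ∀ i, a (i+1) = p (a i) := fun i => Function.iterate_succ_apply' p i w
  have hdlt : ∀ i j, i < j → j ≤ m → d (a j) < d (a i) := by
    intro i j hij hjm
    induction j with
    | zero => omega
    | succ j ih =>
      have h1 : d (a (j+1)) < d (a j) := by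
        rw [hstep]; exact hd _ (hnr j (by omega))
      rcases Nat.lt_or_ge i j with h | h
      · exact h1.trans (ih h (by omega))
      · have : i = j := by omega
        subst this; exact h1
  have hinj : Set.InjOn a (Set.Icc 1 m) := by
    intro i hi j hj hij
    rcases lt_trichotomy i j with h | h | h
    · have := hdlt i j h hj.2; rw [hij] at this; omega
    · exact h
    · have := hdlt j i h hi.2; rw [hij] at this; omega
  let idx : α → ℕ := Function.invFunOn a (Set.Icc 1 m)
  have hidx : ∀ j, 1 ≤ j → j ≤ m → idx (a j) = j := fun j h1 h2 =>
    hinj.leftInvOn_invFunOn ⟨h1, h2⟩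
  have hdle : ∀ t v, d (p^[t] v) ≤ d v := by
    intro t v
    induction t with
    | zero => simp
    | succ t ih =>
      rw [Function.iterate_succ_apply']
      by_cases h : p^[t] v = r
      · rw [h, hpr, ← h]; exact ih
      · exact (hd _ h).le.trans ih
  let I : Finset α := (Finset.Icc 1 m).image a
  let Tw : Finset α := Finset.univ.filter (fun v => ∃ t, p^[t] v = w)
  have hTw : ∀ v, v ∈ Tw ↔ ∃ t, p^[t] v = w := fun v => by simp [Tw]
  have haI : ∀ j, 1 ≤ j → j ≤ m → a j ∈ I := fun j h1 h2 =>
    Finset.mem_image_of_mem _ (Finset.mem_Icc.2 ⟨h1, h2⟩)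
  have hI : ∀ v ∈ I, ∃ j, 1 ≤ j ∧ j ≤ m ∧ v = a j := by
    intro v hv
    obtain ⟨j, hj, rfl⟩ := Finset.mem_image.1 hv
    rw [Finset.mem_Icc] at hj
    exact ⟨j, hj.1, hj.2, rfl⟩
  have hdisj : ∀ v ∈ Tw, v ∉ I := by
    intro v hv hvI
    obtain ⟨j, h1, h2, rfl⟩ := hI v hvI
    obtain ⟨t, ht⟩ := (hTw _).1 hv
    have h3 := hdle t (a j)
    rw [ht] at h3
    have h4 := hdlt 0 j (by omega) h2
    simp only [ha, Function.iterate_zero, id] at h4 h3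
    omega
  have hwTw : w ∈ Tw := (hTw w).2 ⟨0, rfl⟩
  have hTwp : ∀ v ∈ Tw, v ≠ w → v ≠ r ∧ p v ∈ Tw := by
    intro v hv hvw
    obtain ⟨t, ht⟩ := (hTw _).1 hv
    constructor
    · rintro rfl
      rw [Function.iterate_fixed hpr] at ht
      exact hvw ht
    · cases t with
      | zero => exact absurd ht hvw
      | succ t => exact (hTw _).2 ⟨t, by rw [← Function.iterate_succ_apply]; exact ht⟩
  let M := Finset.univ.sup d + 1
  have hM : ∀ v, d v < M := fun v => Nat.lt_succ_of_le (Finset.le_sup (Finset.mem_univ v))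
  let p' : α → α := fun v => if v ∈ I then (if idx v ∈ S then a (idx v + 1) else f (idx v)) else p v
  let d' : α → ℕ := fun v => if v ∈ I then M + 2 * idx v + (if idx v ∈ S then 3 else 0) else d v
  have hp'a : ∀ j, 1 ≤ j → j ≤ m → p' (a j) = if j ∈ S then a (j+1) else f j := by
    intro j h1 h2
    simp only [p', if_pos (haI j h1 h2), hidx j h1 h2]
  have hd'a : ∀ j, 1 ≤ j → j ≤ m → d' (a j) = M + 2 * j + (if j ∈ S then 3 else 0) := by
    intro j h1 h2
    simp only [d', if_pos (haI j h1 h2), hidx j h1 h2]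
  have hp't : ∀ v ∈ Tw, p' v = p v := fun v hv => if_neg (hdisj v hv)
  have hd't : ∀ v ∈ Tw, d' v = d v := fun v hv => if_neg (hdisj v hv)
  have hT : IsT E (Tw ∪ I) w p' := by
    refine ⟨Finset.mem_union_left _ hwTw, ?_, d', ?_⟩
    · intro v hv hvw
      rcases Finset.mem_union.1 hv with h | h
      · rw [hp't v h]
        exact ⟨Finset.mem_union_left _ (hTwp v h hvw).2, hE v (hTwp v h hvw).1⟩
      · obtain ⟨j, h1, h2, rfl⟩ := hI v h
        rw [hp'a j h1 h2]
        split_ifs with hjS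
        · have := hS j hjS
          refine ⟨Finset.mem_union_right _ (haI _ (by omega) (by omega)), ?_⟩
          rw [hstep]
          exact hE _ (hnr j this.2.1)
        · refine ⟨?_, (hf j h1 h2).1⟩
          rcases hφ2 j h1 h2 with h3 | h3
          · exact Finset.mem_union_left _ ((hTw _).2 h3.2)
          · rw [h3.2.2]
            exact Finset.mem_union_right _ (haI _ (by omega) (by omega))
    · intro v hv hvw
      rcases Finset.mem_union.1 hv with h | h
      · rw [hp't v h, hd't v h, hd't _ (hTwp v h hvw).2]
        exact hd v (hTwp v h hvw).1
      · obtain ⟨j, h1, h2, rfl⟩ := hI v h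
        rw [hp'a j h1 h2, hd'a j h1 h2]
        split_ifs with hjS
        · have := hS j hjS
          rw [hd'a _ (by omega) (by omega), if_neg this.2.2]
          omega
        · rcases hφ2 j h1 h2 with h3 | h3
          · rw [hd't _ ((hTw _).2 h3.2)]
            have := hM (f j)
            omega
          · rw [h3.2.2]
            change d' (a (φ j)) < _
            rw [hd'a _ (by omega) (by omega)]
            split_ifs <;> omega
  refine le_trans ?_ (hmax _ _ _ hT)
  refine Finset.card_le_card_of_injOn a ?_ ?_
  · intro x hx
    simp only [Finset.coe_filter, Finset.mem_Icc, Set.mem_ofPred_eq] at hx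
    obtain ⟨⟨hx1, hx2⟩, hx3, hx4⟩ := hx
    simp only [lv, Finset.coe_filter, Set.mem_ofPred_eq]
    refine ⟨Finset.mem_union_right _ (haI x hx1 hx2), ?_⟩
    intro c hc hcw
    rcases Finset.mem_union.1 hc with h | h
    · rw [hp't c h]
      intro e
      exact hdisj _ (hTwp c h hcw).2 (e ▸ haI x hx1 hx2)
    · obtain ⟨j, h1, h2, rfl⟩ := hI c h
      rw [hp'a j h1 h2]
      split_ifs with hjS
      · intro e
        have := hS j hjS
        have h5 := hinj ⟨by omega, by omega⟩ ⟨hx1, hx2⟩ e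
        apply hx4
        rw [← h5]; exact hjS
      · intro e
        rcases hφ2 j h1 h2 with h3 | h3
        · exact hdisj _ ((hTw _).2 h3.2) (e ▸ haI x hx1 hx2)
        · apply hx3 j ⟨h1, h2⟩ hjS
          rw [h3.2.2] at e
          exact hinj ⟨by omega, by omega⟩ ⟨hx1, hx2⟩ e
  · intro i hi j hj hij
    simp only [Finset.coe_filter, Finset.mem_Icc, Set.mem_ofPred_eq] at hi hj
    exact hinj hi.1 hj.1 hij

lemma desc_cases (r : α) (p : α → α) (hpr : p r = r) (w u : α) (j : ℕ) :
    (∀ i, i < j → ∀ c, c ≠ r → p c = p^[i+1] w → c = p^[i] w) →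
    ∀ t, p^[t] u = p^[j] w →
      (∃ t, p^[t] u = w) ∨ ∃ i, 1 ≤ i ∧ i ≤ j ∧ u = p^[i] w := by
  induction j with
  | zero => intro _ t ht; exact Or.inl ⟨t, ht⟩
  | succ j ih =>
    intro h t
    induction t with
    | zero => intro ht; exact Or.inr ⟨j+1, by omega, le_rfl, ht⟩
    | succ t iht =>
      intro ht
      rw [Function.iterate_succ_apply'] at ht
      by_cases hr : p^[t] u = r
      · apply iht
        rw [hr, hpr] at ht
        rw [hr, ht]
      · have := h j (by omega) _ hr ht
        rcases ih (fun i hi => h i (by omega)) t this with h1 | ⟨i, h1, h2, h3⟩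
        · exact Or.inl h1
        · exact Or.inr ⟨i, h1, by omega, h3⟩

/-- children count -/
def ch (r : α) (p : α → α) (v : α) : Finset α := Finset.univ.filter (fun c => c ≠ r ∧ p c = v)

lemma branch_count (r : α) (p : α → α) :
    (Finset.univ.filter (fun v => 2 ≤ (ch r p v).card)).card + 1 ≤ (lv Finset.univ r p).card := by
  have h1 : ∑ v, (ch r p v).card + 1 = Fintype.card α := by
    have : (Finset.univ.erase r).card = ∑ v, (ch r p v).card := by
      rw [Finset.card_eq_sum_card_fiberwise (f := p) (t := Finset.univ) (by simp)]
      apply Finset.sum_congr rfl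
      intro v _
      congr 1
      ext c
      simp [ch]
    rw [← this, Finset.card_erase_of_mem (Finset.mem_univ _), Finset.card_univ]
    have : 0 < Fintype.card α := Fintype.card_pos_iff.2 ⟨r⟩
    omega
  have h2 : ∀ v ∈ (Finset.univ : Finset α), 1 + (if 2 ≤ (ch r p v).card then 1 else 0) ≤
      (ch r p v).card + (if (∀ c ∈ (Finset.univ : Finset α), c ≠ r → p c ≠ v) then 1 else 0) := by
    intro v _
    by_cases h0 : (ch r p v).card = 0
    · rw [if_neg (by omega), if_pos]
      · omega
      · intro c _ hc e
        rw [Finset.card_eq_zero] at h0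
        have : c ∈ ch r p v := by simp [ch, hc, e]
        rw [h0] at this
        simp at this
    · split_ifs <;> omega
  have h3 := Finset.sum_le_sum h2
  simp only [Finset.sum_add_distrib] at h3
  rw [← Finset.card_filter, ← Finset.card_filter] at h3
  simp only [Finset.sum_const, Finset.card_univ, smul_eq_mul, mul_one] at h3
  unfold lv
  omega

/-- vertices that could be moved below a non-descendant -/
def IsBad (E : α → α → Prop) (r : α) (p : α → α) (x u : α) : Prop :=
  x ≠ r ∧ (∀ c, c ≠ r → p c = p x → c = x) ∧ E u x ∧ u ≠ p x ∧ ∀ t, p^[t] u ≠ x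

lemma bad_fiber (E : α → α → Prop) (r : α) (p : α → α) (hT : IsT E Finset.univ r p)
    (hmax : ∀ W r' p', IsT E W r' p' → (lv W r' p').card ≤ (lv Finset.univ r p).card)
    (u : α) (X : Finset α) (hX : ∀ x ∈ X, IsBad E r p x u) :
    X.card ≤ if u ∈ lv Finset.univ r p then 1 else 0 := by
  classical
  obtain ⟨_, hE, d, hd⟩ := hT
  let Y : α → Prop := fun v => ∃ x ∈ X, ∃ t, p^[t] v = x
  let p' : α → α := fun v => if v ∈ X then u else p v
  have hT' : IsT E Finset.univ r p' := by
    refine ⟨Finset.mem_univ _, ?_, fun v => if Y v then d v + (d u + 1) else d v, ?_⟩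
    · intro v _ hv
      refine ⟨Finset.mem_univ _, ?_⟩
      simp only [p']
      split_ifs with h
      · exact (hX v h).2.2.1
      · exact (hE v (Finset.mem_univ _) hv).2
    · intro v _ hv
      have hdv := hd v (Finset.mem_univ _) hv
      simp only [p']
      by_cases h : v ∈ X
      · rw [if_pos h]
        have hYv : Y v := ⟨v, h, 0, rfl⟩
        have hYu : ¬ Y u := by
          rintro ⟨x, hx, t, ht⟩
          exact (hX x hx).2.2.2.2 t ht
        rw [if_pos hYv, if_neg hYu]
        omega
      · rw [if_neg h]
        have : Y v ↔ Y (p v) := by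
          constructor
          · rintro ⟨x, hx, t, ht⟩
            cases t with
            | zero =>
              have ht : v = x := ht
              exact absurd (ht ▸ hx) h
            | succ t => exact ⟨x, hx, t, by rw [← Function.iterate_succ_apply]; exact ht⟩
          · rintro ⟨x, hx, t, ht⟩
            exact ⟨x, hx, t+1, by rw [Function.iterate_succ_apply]; exact ht⟩
        by_cases hY : Y v
        · rw [if_pos hY, if_pos (this.1 hY)]; omega
        · rw [if_neg hY, if_neg (fun h => hY (this.2 h))]; exact hdv
  have hle := hmax _ _ _ hT'
  have hsub : ((lv Finset.univ r p).erase u) ∪ X.image p ⊆ lv Finset.univ r p' := by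
    intro v hv
    simp only [lv, Finset.mem_filter, Finset.mem_univ, true_and, true_implies]
    intro c hc
    rcases Finset.mem_union.1 hv with h | h
    · rw [Finset.mem_erase] at h
      simp only [lv, Finset.mem_filter, Finset.mem_univ, true_and, true_implies] at h
      simp only [p']
      split_ifs
      · exact h.1.symm
      · exact h.2 c hc
    · obtain ⟨x, hx, rfl⟩ := Finset.mem_image.1 h
      simp only [p']
      split_ifs with h2
      · exact (hX x hx).2.2.2.1
      · intro e
        have := (hX x hx).2.1 c hc e
        exact h2 (this ▸ hx)
  have hdis : Disjoint ((lv Finset.univ r p).erase u) (X.image p) := by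
    rw [Finset.disjoint_left]
    intro v hv hv2
    obtain ⟨x, hx, rfl⟩ := Finset.mem_image.1 hv2
    have := (Finset.mem_erase.1 hv).2
    simp only [lv, Finset.mem_filter, Finset.mem_univ, true_and, true_implies] at this
    exact this x (hX x hx).1 rfl
  have hc := Finset.card_le_card hsub
  rw [Finset.card_union_of_disjoint hdis, Finset.card_image_of_injOn] at hc
  · by_cases hu : u ∈ lv Finset.univ r p
    · rw [if_pos hu]
      rw [Finset.card_erase_of_mem hu] at hc
      have := Finset.card_pos.2 ⟨u, hu⟩
      omega
    · rw [if_neg hu]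
      rw [Finset.erase_eq_of_notMem hu] at hc
      omega
  · intro x hx y hy hxy
    exact (hX y hy).2.1 x (hX x hx).1 hxy

lemma bad_count (E : α → α → Prop) (r : α) (p : α → α) (hT : IsT E Finset.univ r p)
    (hmax : ∀ W r' p', IsT E W r' p' → (lv W r' p').card ≤ (lv Finset.univ r p).card)
    (B : Finset α) (hB : ∀ x ∈ B, ∃ u, IsBad E r p x u) :
    B.card ≤ (lv Finset.univ r p).card := by
  classical
  choose! U hU using hB
  rw [Finset.card_eq_sum_card_fiberwise (f := U) (t := Finset.univ) (by simp)]
  calc _ ≤ ∑ u : α, (if u ∈ lv Finset.univ r p then 1 else 0) := by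
        apply Finset.sum_le_sum
        intro u _
        apply bad_fiber E r p hT hmax u
        intro x hx
        rw [Finset.mem_filter] at hx
        have := hU x hx.1
        rwa [hx.2] at this
    _ = _ := by simp

theorem main (E : α → α → Prop) (hs : ∀ u v, Relation.ReflTransGen E u v) [Nonempty α]
    (hirr : ∀ v, ¬ E v v)
    (hdeg : ∀ v a b, E v b → ∃ u, E u v ∧ u ≠ a ∧ u ≠ b) :
    ∃ r p, IsT E Finset.univ r p ∧ Fintype.card α ≤ 16 * (lv Finset.univ r p).card ^ 2 := by
  classical
  obtain ⟨r, p0, hT0, hmax0⟩ := exists_max E hs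
  obtain ⟨hT, hlv⟩ := normalize E _ r p0 hT0
  rw [← hlv] at hmax0
  have hpr : Function.update p0 r r r = r := Function.update_self ..
  generalize Function.update p0 r r = p at hT hmax0 hpr
  refine ⟨r, p, hT, ?_⟩
  have hT' := hT
  obtain ⟨_, hE, d, hd⟩ := hT'
  replace hE : ∀ v, v ≠ r → E (p v) v := fun v hv => (hE v (Finset.mem_univ _) hv).2
  replace hd : ∀ v, v ≠ r → d (p v) < d v := fun v hv => hd v (Finset.mem_univ _) hv
  set L := lv Finset.univ r p with hL
  let Br : Finset α := Finset.univ.filter (fun v => 2 ≤ (ch r p v).card)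
  let B : Finset α := Finset.univ.filter (fun x => ∃ u, IsBad E r p x u)
  have hBr : Br.card + 1 ≤ L.card := branch_count r p
  have hB : B.card ≤ L.card := bad_count E r p hT hmax0 B (by intro x hx; simpa [B] using hx)
  let C := L ∪ Br ∪ B
  have hC : C.card + 1 ≤ 3 * L.card := by
    have h1 := Finset.card_union_le (L ∪ Br) B
    have h2 := Finset.card_union_le L Br
    simp only [C]
    omega
  have huniq : ∀ v, v ∉ Br → ∀ c c', c ≠ r → c' ≠ r → p c = v → p c' = v → c = c' := by
    intro v hv c c' h1 h2 h3 h4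
    by_contra hne
    apply hv
    simp only [Br, Finset.mem_filter, Finset.mem_univ, true_and]
    have : ({c, c'} : Finset α) ⊆ ch r p v := by
      intro x hx
      simp only [Finset.mem_insert, Finset.mem_singleton] at hx
      rcases hx with rfl | rfl <;> simp [ch, *]
    have := Finset.card_le_card this
    rwa [Finset.card_pair hne] at this
  have hchild : ∀ v, v ∉ L → ∃ c, c ≠ r ∧ p c = v := by
    intro v hv
    by_contra hne
    push Not at hne
    apply hv
    simp only [hL, lv, Finset.mem_filter, Finset.mem_univ, true_and, true_implies]
    exact hne
  have hdle : ∀ v, d v ≤ Finset.univ.sup d := fun v => Finset.le_sup (Finset.mem_univ v)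
  have hcov : ∀ n x, Finset.univ.sup d - d x = n → ∃ w ∈ C, ∃ j, p^[j] w = x ∧
      (∀ i < j, p^[i] w ≠ r) ∧ ∀ i, 1 ≤ i → i ≤ j → p^[i] w ∉ C := by
    intro n
    induction n using Nat.strong_induction_on with
    | _ n ih =>
      intro x hx
      by_cases hxC : x ∈ C
      · exact ⟨x, hxC, 0, rfl, by simp, by intro i h1 h2; omega⟩
      · obtain ⟨c, hc, hcx⟩ := hchild x (fun h => hxC (by simp [C, h]))
        have h1 := hd c hc
        rw [hcx] at h1
        have h2 := hdle c
        obtain ⟨w, hw, j, h3, h4, h5⟩ := ih _ (by omega) c rfl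
        have h6 : p^[j+1] w = x := by rw [Function.iterate_succ_apply', h3, hcx]
        refine ⟨w, hw, j+1, h6, ?_, ?_⟩
        · intro i hi
          rcases Nat.lt_or_ge i j with h | h
          · exact h4 i h
          · have : i = j := by omega
            subst this; rw [h3]; exact hc
        · intro i hi1 hi
          rcases Nat.lt_or_ge j i with h | h
          · have : i = j + 1 := by omega
            subst this; rw [h6]; exact hxC
          · exact h5 i hi1 h
  have hbound : ∀ w j, (∀ i < j, p^[i] w ≠ r) → (∀ i, 1 ≤ i → i ≤ j → p^[i] w ∉ C) →
      j < 4 * L.card + 3 := by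
    intro w j hnr hnc
    have hun : ∀ i, i < j → ∀ c, c ≠ r → p c = p^[i+1] w → c = p^[i] w := by
      intro i hi c hc hpc
      have h1 := hnc (i+1) (by omega) (by omega)
      exact huniq _ (fun h => h1 (Finset.mem_union_left _ (Finset.mem_union_right _ h))) c _ hc (hnr i hi) hpc
        (Function.iterate_succ_apply' p i w).symm
    have hgood : ∀ i, ∃ u, 1 ≤ i → i ≤ j - 1 → E u (p^[i] w) ∧ ((∃ t, p^[t] u = w) ∨
        ∃ i', 1 ≤ i' ∧ i' + 2 ≤ i ∧ u = p^[i'] w) := by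
      intro i
      by_cases hi : 1 ≤ i ∧ i ≤ j - 1
      swap
      · exact ⟨w, fun h1 h2 => absurd ⟨h1, h2⟩ hi⟩
      obtain ⟨hi1, hi2⟩ := hi
      have hprev : p (p^[i-1] w) = p^[i] w := by
        rw [← Function.iterate_succ_apply' p (i-1) w, Nat.succ_eq_add_one, Nat.sub_add_cancel hi1]
      have hEi : E (p^[i] w) (p^[i-1] w) := by
        rw [← hprev]; exact hE _ (hnr _ (by omega))
      obtain ⟨u, hu1, hu2, hu3⟩ := hdeg _ (p^[i+1] w) _ hEi
      refine ⟨u, fun _ _ => ⟨hu1, ?_⟩⟩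
      have hdesc : ∃ t, p^[t] u = p^[i] w := by
        by_contra hne
        push Not at hne
        have : p^[i] w ∈ B := by
          simp only [B, Finset.mem_filter, Finset.mem_univ, true_and]
          refine ⟨u, hnr i (by omega), ?_, hu1, ?_, hne⟩
          · intro c hc hpc
            apply hun i (by omega) c hc
            rw [hpc, Function.iterate_succ_apply']
          · rw [← Function.iterate_succ_apply' p i w]; exact hu2
        exact hnc i hi1 (by omega) (Finset.mem_union_right _ this)
      obtain ⟨t, ht⟩ := hdesc
      rcases desc_cases r p hpr w u i (fun i' hi' => hun i' (by omega)) t ht with h | ⟨i', h1, h2, h3⟩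
      · exact Or.inl h
      · refine Or.inr ⟨i', h1, ?_, h3⟩
        have h4 : i' ≠ i := by
          rintro rfl
          rw [h3] at hu1
          exact hirr _ hu1
        have h5 : i' ≠ i - 1 := by
          rintro rfl
          exact hu3 h3
        omega
    choose f hf using hgood
    have := seg E L.card hmax0 r p d hpr hE hd w (j-1) (fun i hi => hnr i (by omega)) f
      (fun i h1 h2 => hf i h1 h2)
    omega
  have hall : (Finset.univ : Finset α) ⊆
      (C ×ˢ Finset.range (4 * L.card + 3)).image (fun q => p^[q.2] q.1) := by
    intro x _
    obtain ⟨w, hw, j, h1, h2, h3⟩ := hcov _ x rfl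
    rw [Finset.mem_image]
    refine ⟨(w, j), ?_, h1⟩
    rw [Finset.mem_product, Finset.mem_range]
    exact ⟨hw, hbound w j h2 h3⟩
  have h1 := (Finset.card_le_card hall).trans Finset.card_image_le
  rw [Finset.card_univ, Finset.card_product, Finset.card_range] at h1
  obtain ⟨K, hK⟩ : ∃ K, L.card = K + 1 := ⟨L.card - 1, by omega⟩
  rw [hK] at h1 hC ⊢
  have h2 : C.card ≤ 3 * K + 2 := by omega
  have h3 := Nat.mul_le_mul_right (4 * (K + 1) + 3) h2
  nlinarith [sq_nonneg K]

end LeafAux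

namespace DirGraph

lemma reflTransGen_of_chain {V : Type} (D : DirGraph V) (l : List V) :
    ∀ (u v : V) (hu : u ∈ D.verts) (hv : v ∈ D.verts), (∀ x ∈ l, x ∈ D.verts) →
      List.IsChain (fun u v => (u, v) ∈ D.arcs) l → l.head? = some u → l.getLast? = some v →
      Relation.ReflTransGen (fun a b : {x // x ∈ D.verts} => ((a : V), (b : V)) ∈ D.arcs)
        ⟨u, hu⟩ ⟨v, hv⟩ := by
  induction l with
  | nil => intro u v hu hv _ _ h; simp at h
  | cons a l ih =>
    intro u v hu hv hm hc hh hl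
    simp only [List.head?_cons, Option.some.injEq] at hh
    subst hh
    cases l with
    | nil =>
      simp only [List.getLast?_singleton, Option.some.injEq] at hl
      subst hl
      exact Relation.ReflTransGen.refl
    | cons b l =>
      rw [List.isChain_cons_cons] at hc
      rw [List.getLast?_cons_cons] at hl
      have hb : b ∈ D.verts := hm b (by simp)
      exact Relation.ReflTransGen.head (b := ⟨b, hb⟩) hc.1
        (ih b v hb hv (fun x hx => hm x (by simp [hx])) hc.2 rfl hl)

theorem lv_le_ellS {V : Type} [Fintype V] (D : DirGraph V)
    [Fintype {x // x ∈ D.verts}] [DecidableEq {x // x ∈ D.verts}]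
    (r : {x // x ∈ D.verts}) (p : {x // x ∈ D.verts} → {x // x ∈ D.verts})
    (hT : LeafAux.IsT (fun a b : {x // x ∈ D.verts} => ((a : V), (b : V)) ∈ D.arcs)
      Finset.univ r p) :
    (LeafAux.lv Finset.univ r p).card ≤ ellS D := by
  classical
  obtain ⟨_, hE, d, hd⟩ := hT
  replace hE : ∀ v, v ≠ r → ((p v : V), (v : V)) ∈ D.arcs :=
    fun v hv => (hE v (Finset.mem_univ _) hv).2
  replace hd : ∀ v, v ≠ r → d (p v) < d v := fun v hv => hd v (Finset.mem_univ _) hv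
  let T : DirGraph V := ⟨D.verts, {a | ∃ v, v ≠ r ∧ a = ((p v : V), (v : V))}⟩
  have hreach : ∀ n, ∀ v : {x // x ∈ D.verts}, d v = n → ∃ l : List V, T.IsDipath l ∧
      l.head? = some (r : V) ∧ l.getLast? = some (v : V) ∧
      ∀ x ∈ l, ∃ h : x ∈ D.verts, d ⟨x, h⟩ ≤ n := by
    intro n
    induction n using Nat.strong_induction_on with
    | _ n ih =>
      intro v hv
      by_cases hvr : v = r
      · subst hvr
        refine ⟨[(v : V)], ⟨by simp, by simp, ?_, ?_⟩, by simp, by simp, ?_⟩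
        · intro x hx
          rw [List.mem_singleton] at hx
          subst hx; exact v.2
        · exact List.isChain_singleton _
        · intro x hx
          rw [List.mem_singleton] at hx
          subst hx
          exact ⟨v.2, hv.le⟩
      · have hlt := hd v hvr
        obtain ⟨l, ⟨h1, h2, h3, h4⟩, h5, h6, h7⟩ := ih (d (p v)) (by omega) (p v) rfl
        refine ⟨l ++ [(v : V)], ⟨by simp, ?_, ?_, ?_⟩, ?_, by simp, ?_⟩
        · rw [List.nodup_append]
          refine ⟨h2, by simp, ?_⟩
          intro a ha b hb e
          rw [List.mem_singleton] at hb
          subst hb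
          subst e
          obtain ⟨_, h8⟩ := h7 _ ha
          have : d v ≤ d (p v) := h8
          omega
        · intro x hx
          rw [List.mem_append, List.mem_singleton] at hx
          rcases hx with hx | rfl
          · exact h3 x hx
          · exact v.2
        · refine List.IsChain.append h4 (List.isChain_singleton _) ?_
          intro x hx y hy
          rw [h6] at hx
          simp only [Option.mem_def, Option.some.injEq, List.head?_cons] at hx hy
          subst hx; subst hy
          exact ⟨v, hvr, rfl⟩
        · rw [List.head?_append, h5]; rfl
        · intro x hx
          rw [List.mem_append, List.mem_singleton] at hx
          rcases hx with hx | rfl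
          · obtain ⟨h, h8⟩ := h7 x hx
            exact ⟨h, by omega⟩
          · exact ⟨v.2, hv.le⟩
  have hbr : IsOutBranching T D r := by
    refine ⟨⟨⟨?_, r.2, ?_, ?_, ?_⟩, subset_rfl, ?_⟩, rfl⟩
    · rintro a ⟨v, _, rfl⟩
      exact ⟨(p v).2, v.2⟩
    · unfold inDeg
      have : {a ∈ T.arcs | a.2 = (r : V)} = ∅ := by
        ext a
        simp only [Set.mem_sep_iff, Set.mem_empty_iff_false, iff_false, not_and]
        rintro ⟨v, hv, rfl⟩ e
        exact hv (Subtype.ext e)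
      rw [this, Set.ncard_empty]
    · intro v hv hvr
      unfold inDeg
      have : {a ∈ T.arcs | a.2 = v} = {((p ⟨v, hv⟩ : V), v)} := by
        ext a
        simp only [Set.mem_sep_iff, Set.mem_singleton_iff]
        constructor
        · rintro ⟨⟨x, hx, rfl⟩, e⟩
          have : x = ⟨v, hv⟩ := Subtype.ext e
          subst this; rfl
        · rintro rfl
          exact ⟨⟨⟨v, hv⟩, fun e => hvr (congrArg Subtype.val e), rfl⟩, rfl⟩
      rw [this, Set.ncard_singleton]
    · intro v hv
      obtain ⟨l, h1, h2, h3, _⟩ := hreach _ ⟨v, hv⟩ rfl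
      exact ⟨l, h1, h2, h3⟩
    · rintro a ⟨v, hv, rfl⟩
      exact hE v hv
  have hcard : (LeafAux.lv Finset.univ r p).card ≤ (leaves T).ncard := by
    rw [← Set.ncard_coe_finset, ← Set.ncard_image_of_injective _ Subtype.val_injective]
    apply Set.ncard_le_ncard _ (Set.toFinite _)
    rintro _ ⟨v, hv, rfl⟩
    refine ⟨v.2, ?_⟩
    simp only [LeafAux.lv, Finset.coe_filter, Finset.mem_univ, true_and, true_implies,
      Set.mem_ofPred_eq] at hv
    unfold outDeg
    have : {a ∈ T.arcs | a.1 = (v : V)} = ∅ := by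
      ext a
      simp only [Set.mem_sep_iff, Set.mem_empty_iff_false, iff_false, not_and]
      rintro ⟨x, hx, rfl⟩ e
      exact hv x hx (Subtype.ext e)
    rw [this, Set.ncard_empty]
  refine hcard.trans (le_csSup ?_ ⟨T, r, hbr, rfl⟩)
  refine ⟨Nat.card V, ?_⟩
  rintro k ⟨T', r', _, rfl⟩
  exact Set.ncard_le_card _

theorem ellS_ge_quarter_sqrt_of_strongly_connected {V : Type} [Fintype V]
    (D : DirGraph V) (n : ℕ) (hD : D.WellFormed) (hn : D.verts.ncard = n)
    (hconn : ∀ u ∈ D.verts, ∀ v ∈ D.verts, D.Reaches u v)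
    (hdeg : (∀ v ∈ D.verts, 3 ≤ D.inDeg v) ∨
      ((∀ u v : V, (u, v) ∈ D.arcs → (v, u) ∉ D.arcs) ∧
        ∀ v ∈ D.verts, 2 ≤ D.inDeg v)) :
    (1 / 4 : ℝ) * Real.sqrt n ≤ (ellS D : ℝ) := by
  classical
  rcases D.verts.eq_empty_or_nonempty with h0 | ⟨v0, hv0⟩
  · rw [h0, Set.ncard_empty] at hn
    subst hn
    simp
  haveI : Nonempty {x // x ∈ D.verts} := ⟨⟨v0, hv0⟩⟩
  have hkey : ∀ (v : V) (s : Finset V), s.card < D.inDeg v → ∃ u, (u, v) ∈ D.arcs ∧ u ∉ s := by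
    intro v s hlt
    by_contra hne
    push Not at hne
    have hsub : {a ∈ D.arcs | a.2 = v} ⊆ ((s.image (fun u => (u, v)) : Finset (V × V)) : Set (V × V)) := by
      rintro ⟨a, b⟩ ⟨h1, h2⟩
      simp only at h2
      subst h2
      simpa using hne a h1
    have h1 := Set.ncard_le_ncard hsub (Finset.finite_toSet _)
    rw [Set.ncard_coe_finset] at h1
    have h2 : (s.image (fun u => (u, v))).card ≤ s.card := Finset.card_image_le
    unfold inDeg at hlt
    omega
  obtain ⟨r, p, hT, hle⟩ := LeafAux.main
    (fun a b : {x // x ∈ D.verts} => ((a : V), (b : V)) ∈ D.arcs)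
    (by
      rintro ⟨u, hu⟩ ⟨v, hv⟩
      obtain ⟨l, ⟨_, _, h3, h4⟩, h5, h6⟩ := hconn u hu v hv
      exact reflTransGen_of_chain D l u v hu hv h3 h4 h5 h6)
    (fun v h => (hD _ h).2.2 rfl)
    (by
      rintro ⟨v, hv⟩ ⟨a, ha⟩ ⟨b, hb⟩ hvb
      rcases hdeg with h | ⟨h1, h2⟩
      · obtain ⟨u, hu, hus⟩ := hkey v {a, b} (by
          have := h v hv
          have := Finset.card_le_two (a := a) (b := b)
          omega)
        simp only [Finset.mem_insert, Finset.mem_singleton, not_or] at hus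
        exact ⟨⟨u, (hD _ hu).1⟩, hu, fun e => hus.1 (congrArg Subtype.val e),
          fun e => hus.2 (congrArg Subtype.val e)⟩
      · obtain ⟨u, hu, hus⟩ := hkey v {a} (by
          have := h2 v hv
          simp only [Finset.card_singleton]
          omega)
        simp only [Finset.mem_singleton] at hus
        refine ⟨⟨u, (hD _ hu).1⟩, hu, fun e => hus (congrArg Subtype.val e), fun e => ?_⟩
        have : u = b := congrArg Subtype.val e
        subst this
        exact h1 _ _ hvb hu)
  have h1 := lv_le_ellS D r p hT
  have h2 : Fintype.card {x // x ∈ D.verts} = n := by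
    rw [← hn, ← Nat.card_eq_fintype_card]
    rfl
  rw [h2] at hle
  have h3 : (n : ℝ) ≤ (4 * (ellS D : ℝ)) ^ 2 := by
    have h4 : n ≤ 16 * (ellS D) ^ 2 :=
      hle.trans (Nat.mul_le_mul_left _ (Nat.pow_le_pow_left h1 2))
    have h5 : (n : ℝ) ≤ 16 * (ellS D : ℝ) ^ 2 := by exact_mod_cast h4
    nlinarith
  have h6 := Real.sqrt_le_sqrt h3
  rw [Real.sqrt_sq (by positivity)] at h6
  linarith

end DirGraph
end
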